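/- arXiv:1602.06715 — 5 statements merged into one kernel-verified Lean document; each statement's English description precedes it below -/
import Mathlib

section
/- Let n be a positive integer and let A be a subset of G = (ℤ/5ℤ)^n such that the 3-fold sumset 3A is not all of G. If |A| > 3·5^(n-1)/2, then A is contained in a union of two cosets of some subgroup of G of index 5. -/
open Pointwise

/-- `itSum k A` is the `k`-fold sumset `kA = {a₁ + ⋯ + a_k : aᵢ ∈ A}`. -/
def itSum {G : Type*} [AddCommGroup G] : ℕ → Set G → Set G
  | 0, _ => {0}
  | (k + 1), A => itSum k A + A

/-!
Translate `A` so that `0 ∉ A + A + A`. For a nonzero `φ : G → ZMod 5` with kernel of order `N`, a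
weak Kneser theorem, applied to pairs of fibers of `A` over `i` and `j` and compared with the
fiber over `-(i + j)`, gives linear inequalities between the sizes of the five fibers. As these
sizes sum to more than `3N/2`, the inequalities force `A` to meet only two fibers as soon as one
fiber has more than `N/2` elements. If no `φ` has such a fiber, they show instead that the Fourier
coefficient `z` of `A` at `φ` and its rotations satisfy `-Re z, Re (z exp (± iπ/3)) ≤ 16N/25`,
whence `-Re z³ ≤ (16N/25) |z|²`. The cubes of all Fourier coefficients sum to zero while Parseval
gives the sum of the squares of their absolute values, so `|A|² ≤ (16N/25) (5N - |A|)`, which is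
impossible for `|A| > 3N/2` because `9/4 > (16/25) (7/2)`.
-/

open Finset

section Addition

variable {G : Type*} [AddCommGroup G] [DecidableEq G]

theorem card_stabilizer_dvd_card (S : Finset G) :
    Nat.card (AddAction.stabilizer G S) ∣ #S := by
  have hS : (S : Set G) + AddAction.stabilizer G S = S := by
    rw [← AddAction.stabilizer_coe_finset, AddAction.add_stabilizer_self]
  have h := AddSubgroup.card_add_eq_card_addSubgroup_add_card_quotient (AddAction.stabilizer G S) S
  rw [hS, Nat.card_coe_set_eq, Set.ncard_coe_finset] at h
  exact Dvd.intro _ h.symm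

theorem card_le_card_stabilizer_of_sub_mem {S B : Finset G} {b₀ : G} (hS : S.Nonempty)
    (h : ∀ b ∈ B, b - b₀ ∈ AddAction.stabilizer G S) :
    #B ≤ Nat.card (AddAction.stabilizer G S) := by
  have hfin : (AddAction.stabilizer G S : Set G).Finite := by
    rw [← AddAction.stabilizer_coe_finset]
    exact AddAction.stabilizer_finite hS S.finite_toSet
  rw [← Set.ncard_coe_finset]
  exact Set.ncard_le_ncard_of_injOn (· - b₀) h (sub_left_injective.injOn) hfin

/-- A weak form of Kneser's theorem. Dyson's `e`-transform preserves `#A + #B` and shrinks `B` until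
`A` is stable under translation by all differences of elements of `B`. -/
theorem exists_subset_add_card_add_card_le {A B : Finset G} (hA : A.Nonempty) (hB : B.Nonempty) :
    ∃ S ⊆ A + B, S.Nonempty ∧ #A + #B ≤ #S + Nat.card (AddAction.stabilizer G S) := by
  induction hr : #B using Nat.strong_induction_on generalizing A B with
  | _ r ih =>
  subst hr
  by_cases h : ∀ a ∈ A, ∀ b ∈ B, (a - b) +ᵥ B ⊆ A
  · obtain ⟨b₀, hb₀⟩ := hB
    have hS : (b₀ +ᵥ A).Nonempty := hA.vadd_finset
    refine ⟨b₀ +ᵥ A, add_comm A B ▸ vadd_finset_subset_add hb₀, hS, ?_⟩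
    rw [card_vadd_finset, add_le_add_iff_left]
    refine card_le_card_stabilizer_of_sub_mem hS (b₀ := b₀) fun b hb ↦ ?_
    rw [AddAction.mem_stabilizer_finset_iff_vadd_finset_subset, vadd_vadd, sub_add_cancel]
    rintro _ hx
    obtain ⟨a, ha, rfl⟩ := mem_vadd_finset.1 hx
    refine mem_vadd_finset.2 ⟨_, h a ha b₀ hb₀ (vadd_mem_vadd_finset hb), ?_⟩
    simp only [vadd_eq_add]
    abel
  · push Not at h
    obtain ⟨a, ha, b, hb, hab⟩ := h
    have hb' : b ∈ B ∩ (-(a - b) +ᵥ A) := by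
      rw [mem_inter, mem_neg_vadd_finset_iff, vadd_eq_add, sub_add_cancel]
      exact ⟨hb, ha⟩
    have hlt : #(B ∩ (-(a - b) +ᵥ A)) < #B := by
      refine card_lt_card (inter_subset_left.ssubset_of_ne fun h ↦ hab ?_)
      rwa [inter_eq_left, ← vadd_finset_subset_iff] at h
    obtain ⟨S, hS, hS₀, hcard⟩ := ih _ hlt (hA.mono subset_union_left) ⟨b, hb'⟩ rfl
    refine ⟨S, hS.trans (addDysonETransform.subset (a - b) (A, B)), hS₀, ?_⟩
    rwa [← addDysonETransform.card (a - b) (A, B)]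

end Addition

theorem prime_mul_le_of_dvd_of_lt {p n h N : ℕ} (hp : p.Prime) (hN : N ∣ p ^ n) (hdvd : h ∣ N)
    (hlt : h < N) : p * h ≤ N := by
  obtain ⟨t, rfl⟩ := hdvd
  obtain ⟨k, -, rfl⟩ := (Nat.dvd_prime_pow hp).1 ((dvd_mul_left t h).trans hN)
  have hk : k ≠ 0 := by
    rintro rfl
    simp at hlt
  rw [mul_comm]
  exact Nat.mul_le_mul_left h (Nat.le_self_pow hk p)

section Fibers

variable {G Q : Type*} [AddCommGroup G] [AddCommGroup Q]

theorem card_le_card_ker [Finite G] {φ : G →+ Q} {A : Finset G} {q : Q} (h : ∀ a ∈ A, φ a = q) :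
    #A ≤ Nat.card φ.ker := by
  obtain rfl | ⟨a, ha⟩ := A.eq_empty_or_nonempty
  · exact Nat.zero_le _
  rw [← Nat.card_congr (φ.fiberEquivKer a), Nat.card_coe_set_eq, ← Set.ncard_coe_finset]
  exact Set.ncard_le_ncard fun x hx ↦ (h x hx).trans (h a ha).symm

theorem stabilizer_le_ker [DecidableEq G] {φ : G →+ Q} {S : Finset G} {q : Q} (hS : S.Nonempty)
    (h : ∀ s ∈ S, φ s = q) : AddAction.stabilizer G S ≤ φ.ker := by
  intro x hx
  obtain ⟨s, hs⟩ := hS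
  have := h _ ((AddAction.mem_stabilizer_finset.1 hx s).2 hs)
  rwa [vadd_eq_add, map_add, h s hs, add_eq_right] at this

/-- `s` is the size of a part of `A + B`, necessarily disjoint from `-C`, and `h` is the order of
its stabilizer. -/
theorem exists_dvd_card_add_card_le [Finite G] [DecidableEq G] {φ : G →+ Q} {A B C : Finset G}
    {i j k : Q} (hijk : i + j + k = 0) (hA : ∀ a ∈ A, φ a = i) (hB : ∀ b ∈ B, φ b = j)
    (hC : ∀ c ∈ C, φ c = k) (hA₀ : A.Nonempty) (hB₀ : B.Nonempty) (hC₀ : C.Nonempty)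
    (h0 : 0 ∉ A + B + C) :
    ∃ s h : ℕ, h ∣ s ∧ h ∣ Nat.card φ.ker ∧ h < Nat.card φ.ker ∧
      #A + #B ≤ s + h ∧ s + #C ≤ Nat.card φ.ker := by
  obtain ⟨S, hSAB, hS₀, hcard⟩ := exists_subset_add_card_add_card_le hA₀ hB₀
  have hS : ∀ s ∈ S, φ s = -k := by
    intro s hs
    obtain ⟨a, ha, b, hb, rfl⟩ := mem_add.1 (hSAB hs)
    rw [map_add, hA a ha, hB b hb, eq_neg_of_add_eq_zero_left hijk]
  have hdisj : Disjoint S (-C) := by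
    refine disjoint_left.2 fun s hs hsC ↦ h0 ?_
    simpa using add_mem_add (hSAB hs) (mem_neg'.1 hsC)
  have hSC : #S + #C ≤ Nat.card φ.ker := by
    rw [← card_neg C, ← card_union_of_disjoint hdisj]
    refine card_le_card_ker (q := -k) fun x hx ↦ (mem_union.1 hx).elim (hS x) fun hxC ↦ ?_
    rw [← hC _ (mem_neg'.1 hxC), map_neg, neg_neg]
  have hdvd := card_stabilizer_dvd_card S
  refine ⟨#S, _, hdvd, AddSubgroup.card_dvd_of_le (stabilizer_le_ker hS₀ hS), ?_, hcard, hSC⟩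
  have := Nat.le_of_dvd hS₀.card_pos hdvd
  have := hC₀.card_pos
  lia

end Fibers

/-- The number of elements of `A` in the fiber of `φ` over `q`. -/
def fiberCard {G Q : Type*} [AddCommGroup G] [AddCommGroup Q] [DecidableEq Q] (φ : G →+ Q)
    (A : Finset G) (q : Q) : ℕ := #{a ∈ A | φ a = q}

theorem sum_fiberCard {G Q : Type*} [AddCommGroup G] [AddCommGroup Q] [DecidableEq Q] [Fintype Q]
    (φ : G →+ Q) (A : Finset G) : ∑ q, fiberCard φ A q = #A :=
  (card_eq_sum_card_fiberwise fun _ _ ↦ mem_coe.2 (mem_univ _)).symm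

/-- The relations between the fiber sizes of a subset of a finite `p`-group containing no three
elements, not necessarily distinct, with sum zero. The group maps to `Q` with kernel of order `N`,
and `x q` counts the elements of the subset lying over `q`. -/
structure ZeroSumFreeProfile {Q : Type*} [AddCommGroup Q] (p N : ℕ) (x : Q → ℕ) : Prop where
  add_add_le {i j k : Q} : i + j + k = 0 → 0 < x i → 0 < x j → 0 < x k →
    p * (x i + x j + x k) ≤ (p + 1) * N
  add_le {i j k : Q} : i + j + k = 0 → 0 < x i → 0 < x j → 0 < x k → x i + x j ≤ N
  two_mul_add_le {i j k : Q} : i + j + k = 0 → 0 < x i → 0 < x j → N < 2 * x k →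
    2 * p * (x i + x j) ≤ (p + 1) * N

theorem zeroSumFreeProfile_fiberCard {G Q : Type*} [AddCommGroup G] [Finite G] [AddCommGroup Q]
    [DecidableEq G] [DecidableEq Q] {p n : ℕ} (hp : p.Prime) (hG : Nat.card G = p ^ n)
    (φ : G →+ Q) {A : Finset G} (h0 : 0 ∉ A + A + A) :
    ZeroSumFreeProfile p (Nat.card φ.ker) (fiberCard φ A) := by
  have key {i j k : Q} (hijk : i + j + k = 0) (hi : 0 < fiberCard φ A i)
      (hj : 0 < fiberCard φ A j) (hk : 0 < fiberCard φ A k) :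
      ∃ s h : ℕ, h ∣ s ∧ h ∣ Nat.card φ.ker ∧ p * h ≤ Nat.card φ.ker ∧
        fiberCard φ A i + fiberCard φ A j ≤ s + h ∧ s + fiberCard φ A k ≤ Nat.card φ.ker := by
    have hsub (q : Q) : {a ∈ A | φ a = q} ⊆ A := filter_subset _ A
    obtain ⟨s, h, hs, hN, hlt, hij, hsk⟩ := exists_dvd_card_add_card_le hijk
      (fun a ha ↦ (mem_filter.1 ha).2) (fun a ha ↦ (mem_filter.1 ha).2)
      (fun a ha ↦ (mem_filter.1 ha).2) (card_pos.1 hi) (card_pos.1 hj) (card_pos.1 hk)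
      fun h ↦ h0 (add_subset_add (add_subset_add (hsub i) (hsub j)) (hsub k) h)
    exact ⟨s, h, hs, hN,
      prime_mul_le_of_dvd_of_lt hp (hG ▸ φ.ker.card_addSubgroup_dvd_card) hN hlt, hij, hsk⟩
  -- Since `h` divides both `s` and the order of the kernel, a strict inequality between them
  -- (or between `2 * s` and the order of the kernel) improves by `h`.
  refine ⟨fun hijk hi hj hk ↦ ?_, fun hijk hi hj hk ↦ ?_, fun hijk hi hj hk ↦ ?_⟩
  · obtain ⟨s, h, -, -, hph, hij, hsk⟩ := key hijk hi hj hk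
    nlinarith
  · obtain ⟨s, h, hs, hN, -, hij, hsk⟩ := key hijk hi hj hk
    have : s + h ≤ Nat.card φ.ker := by
      refine Nat.ModEq.add_le_of_lt ?_ (by lia)
      exact ((Nat.modEq_zero_iff_dvd.2 hs).trans (Nat.modEq_zero_iff_dvd.2 hN).symm)
    lia
  · obtain ⟨s, h, hs, hN, hph, hij, hsk⟩ := key hijk hi hj (by lia)
    have : 2 * s + h ≤ Nat.card φ.ker := by
      refine Nat.ModEq.add_le_of_lt ?_ (by lia)
      exact ((Nat.modEq_zero_iff_dvd.2 (hs.mul_left 2)).trans (Nat.modEq_zero_iff_dvd.2 hN).symm)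
    nlinarith

theorem sum_univ_zmod_five {M : Type*} [AddCommMonoid M] (f : ZMod 5 → M) :
    ∑ j, f j = f 0 + f 1 + f 2 + f 3 + f 4 :=
  Fin.sum_univ_five f

namespace ZeroSumFreeProfile

section Basic

variable {Q Q' : Type*} [AddCommGroup Q] [AddCommGroup Q'] {p N : ℕ} {x : Q → ℕ}

theorem comp (h : ZeroSumFreeProfile p N x) (f : Q' →+ Q) : ZeroSumFreeProfile p N (x ∘ f) where
  add_add_le hijk := h.add_add_le (by rw [← map_add, ← map_add, hijk, map_zero])
  add_le hijk := h.add_le (by rw [← map_add, ← map_add, hijk, map_zero])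
  two_mul_add_le hijk := h.two_mul_add_le (by rw [← map_add, ← map_add, hijk, map_zero])

theorem add_add_le_of_two_mul_le (h : ZeroSumFreeProfile p N x) (hx : ∀ q, 2 * x q ≤ N) {i j k : Q}
    (hijk : i + j + k = 0) : p * (x i + x j + x k) ≤ (p + 1) * N := by
  by_cases hpos : 0 < x i ∧ 0 < x j ∧ 0 < x k
  · exact h.add_add_le hijk hpos.1 hpos.2.1 hpos.2.2
  · have hN : x i + x j + x k ≤ N := by
      have := hx i
      have := hx j
      have := hx k
      lia
    exact Nat.mul_le_mul (Nat.le_succ p) hN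

end Basic

section ZModFive

variable {N : ℕ} {x : ZMod 5 → ℕ}

theorem exists_support_of_lt_two_mul_one (h : ZeroSumFreeProfile 5 N x)
    (hx : 3 * N < 2 * ∑ q, x q) (h1 : N < 2 * x 1) :
    ∃ j, ∀ k, x k ≠ 0 → k = 1 ∨ k = j := by
  have h3 : x 3 = 0 := by
    by_contra h3
    have := h.add_le (show (1 : ZMod 5) + 1 + 3 = 0 by decide) (by lia) (by lia) (by lia)
    lia
  rw [sum_univ_zmod_five] at hx
  have h12 := h.add_le (show (1 : ZMod 5) + 2 + 2 = 0 by decide)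
  have h04 : x 0 = 0 ∨ x 4 = 0 := by
    have h14 := h.add_add_le (show (1 : ZMod 5) + 4 + 0 = 0 by decide)
    have h22 := h.two_mul_add_le (show (2 : ZMod 5) + 2 + 1 = 0 by decide)
    lia
  have h02 : x 0 = 0 ∨ x 2 = 0 := by
    have h00 := h.add_add_le (show (0 : ZMod 5) + 0 + 0 = 0 by decide)
    lia
  have h24 : x 2 = 0 ∨ x 4 = 0 := by
    have h44 := h.add_le (show (4 : ZMod 5) + 4 + 2 = 0 by decide)
    lia
  have hpair : (x 2 = 0 ∧ x 4 = 0) ∨ (x 0 = 0 ∧ x 4 = 0) ∨ (x 0 = 0 ∧ x 2 = 0) := by lia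
  have huniv (k : ZMod 5) : k = 0 ∨ k = 1 ∨ k = 2 ∨ k = 3 ∨ k = 4 := by decide +revert
  obtain ⟨h2, h4⟩ | ⟨h0, h4⟩ | ⟨h0, h2⟩ := hpair
  on_goal 1 => use 0
  on_goal 2 => use 2
  on_goal 3 => use 4
  all_goals
    intro k hk
    obtain rfl | rfl | rfl | rfl | rfl := huniv k <;> simp_all

theorem exists_support_of_lt_two_mul (h : ZeroSumFreeProfile 5 N x)
    (hx : 3 * N < 2 * ∑ q, x q) {i : ZMod 5} (hi : N < 2 * x i) :
    ∃ j, ∀ k, x k ≠ 0 → k = i ∨ k = j := by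
  have : Fact (Nat.Prime 5) := ⟨Nat.prime_five⟩
  have hi0 : i ≠ 0 := by
    rintro rfl
    have := h.add_le (show (0 : ZMod 5) + 0 + 0 = 0 from rfl) (by lia) (by lia) (by lia)
    lia
  have hsum : ∑ q, x (i * q) = ∑ q, x q := Equiv.sum_comp (Equiv.mulLeft₀ i hi0) x
  obtain ⟨j, hj⟩ := (h.comp (AddMonoidHom.mulLeft i)).exists_support_of_lt_two_mul_one
    (by simpa [hsum] using hx) (by simpa using hi)
  refine ⟨i * j, fun k hk ↦ ?_⟩
  have := hj (i⁻¹ * k) (by simpa [mul_inv_cancel_left₀ hi0] using hk)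
  rwa [inv_mul_eq_iff_eq_mul₀ hi0, inv_mul_eq_iff_eq_mul₀ hi0, mul_one] at this

end ZModFive

end ZeroSumFreeProfile

section TrigonometricBounds

open scoped Real

theorem re_pow_three_le {w : ℂ} (hw : 0 ≤ w.re) : (w ^ 3).re ≤ w.re * Complex.normSq w := by
  have h : (w ^ 3).re = w.re ^ 3 - 3 * w.re * w.im ^ 2 := by
    simp only [pow_succ, pow_zero, one_mul, Complex.mul_re, Complex.mul_im]
    ring
  rw [h, Complex.normSq_apply]
  nlinarith [mul_nonneg hw (sq_nonneg w.im)]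

theorem neg_re_pow_three_le_of_pow_three_eq_neg_one {z u : ℂ} {c : ℝ} (hu : u ^ 3 = -1)
    (hc : (z * u).re ≤ c) (hpos : 0 ≤ (z * u).re) : -(z ^ 3).re ≤ c * Complex.normSq z := by
  have hnorm : Complex.normSq u = 1 := by
    have : ‖u‖ ^ 3 = 1 := by rw [← norm_pow, hu, norm_neg, norm_one]
    rw [Complex.normSq_eq_norm_sq,
      (pow_eq_one_iff_of_nonneg (norm_nonneg u) three_ne_zero).1 this, one_pow]
  calc -(z ^ 3).re = ((z * u) ^ 3).re := by rw [mul_pow, hu, mul_neg_one, Complex.neg_re]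
    _ ≤ (z * u).re * Complex.normSq (z * u) := re_pow_three_le hpos
    _ = (z * u).re * Complex.normSq z := by rw [Complex.normSq_mul, hnorm, mul_one]
    _ ≤ c * Complex.normSq z := mul_le_mul_of_nonneg_right hc (Complex.normSq_nonneg z)

theorem exp_mul_I_pow_three_eq_neg_one {t : ℝ} (ht : 3 * t = π ∨ 3 * t = -π) :
    Complex.exp (t * Complex.I) ^ 3 = -1 := by
  rw [← Complex.exp_nat_mul, ← mul_assoc, show ((3 : ℕ) : ℂ) * t = (3 * t : ℝ) by push_cast; rfl]
  obtain h | h := ht <;> simp [h, Complex.exp_neg]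

/-- The cube roots `-1`, `exp (± iπ/3)` of `-1` sum to zero, so rotating `z` by one of them gives a
number `w` with nonnegative real part, and `-z ^ 3 = w ^ 3`. -/
theorem neg_re_pow_three_le {z : ℂ} {c : ℝ} (h₀ : -z.re ≤ c)
    (h₁ : (z * Complex.exp ((π / 3 : ℝ) * Complex.I)).re ≤ c)
    (h₂ : (z * Complex.exp ((-(π / 3) : ℝ) * Complex.I)).re ≤ c) :
    -(z ^ 3).re ≤ c * Complex.normSq z := by
  have hsum : -z.re + (z * Complex.exp ((π / 3 : ℝ) * Complex.I)).re +
      (z * Complex.exp ((-(π / 3) : ℝ) * Complex.I)).re = 0 := by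
    simp only [Complex.mul_re, Complex.exp_ofReal_mul_I_re, Complex.exp_ofReal_mul_I_im,
      Real.cos_neg, Real.sin_neg, Real.cos_pi_div_three]
    ring
  obtain h | h | h : 0 ≤ -z.re ∨ 0 ≤ (z * Complex.exp ((π / 3 : ℝ) * Complex.I)).re ∨
      0 ≤ (z * Complex.exp ((-(π / 3) : ℝ) * Complex.I)).re := by
    by_contra! h
    linarith
  · exact neg_re_pow_three_le_of_pow_three_eq_neg_one (u := -1) (by norm_num)
      (by simpa using h₀) (by simpa using h)
  · exact neg_re_pow_three_le_of_pow_three_eq_neg_one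
      (exp_mul_I_pow_three_eq_neg_one (.inl (by ring))) h₁ h
  · exact neg_re_pow_three_le_of_pow_three_eq_neg_one
      (exp_mul_I_pow_three_eq_neg_one (.inr (by ring))) h₂ h

theorem re_stdAddChar_mul_exp {N : ℕ} [NeZero N] (j : ℤ) (t : ℝ) :
    (ZMod.stdAddChar (j : ZMod N) * Complex.exp (t * Complex.I)).re =
      Real.cos (2 * π * j / N + t) := by
  rw [ZMod.stdAddChar_coe, ← Complex.exp_add, ← Complex.exp_ofReal_mul_I_re]
  push_cast
  ring_nf

theorem re_sum_stdAddChar_mul_exp (x : ZMod 5 → ℕ) (t : ℝ) :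
    ((∑ j, x j * ZMod.stdAddChar j) * Complex.exp (t * Complex.I)).re =
      x 0 * Real.cos t + x 1 * Real.cos (2 * π / 5 + t) +
        x 2 * Real.cos (4 * π / 5 + t) + x 3 * Real.cos (6 * π / 5 + t) +
        x 4 * Real.cos (8 * π / 5 + t) := by
  have hterm (q : ZMod 5) (j : ℤ) (hj : (j : ZMod 5) = q) :
      (x q * ZMod.stdAddChar q * Complex.exp (t * Complex.I)).re =
        x q * Real.cos (2 * π * j / 5 + t) := by
    rw [mul_assoc, ← Complex.ofReal_natCast, Complex.re_ofReal_mul, ← hj, re_stdAddChar_mul_exp,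
      Nat.cast_ofNat]
  rw [sum_mul, Complex.re_sum, sum_univ_zmod_five, hterm 0 0 rfl, hterm 1 1 rfl, hterm 2 2 rfl,
    hterm 3 3 rfl, hterm 4 4 rfl]
  push_cast
  ring_nf

theorem three_tenths_le_cos_two_pi_div_five : 3 / 10 ≤ Real.cos (2 * π / 5) := by
  have h5 : 2.236 < √5 := Real.lt_sqrt_of_sq_lt (by norm_num)
  rw [show 2 * π / 5 = 2 * (π / 5) by ring, Real.cos_two_mul, Real.cos_pi_div_five]
  nlinarith

theorem neg_le_cos_four_pi_div_five : -(81 / 100) ≤ Real.cos (4 * π / 5) := by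
  have h5 : √5 < 2.24 := (Real.sqrt_lt' (by norm_num)).2 (by norm_num)
  rw [show 4 * π / 5 = π - π / 5 by ring, Real.cos_pi_sub, Real.cos_pi_div_five]
  linarith

theorem cos_four_pi_div_five_sub_le :
    Real.cos (4 * π / 5 - π / 3) ≤ 11 / 100 := by
  have hsin := Real.sin_le (x := π / 30) (by positivity)
  have hpi := Real.pi_lt_d2
  rw [show 4 * π / 5 - π / 3 = π / 2 - π / 30 by ring,
    Real.cos_pi_div_two_sub]
  linarith

theorem cos_le_neg_half {t : ℝ} (h₁ : 2 * π / 3 ≤ t) (h₂ : t ≤ 4 * π / 3) :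
    Real.cos t ≤ -(1 / 2) := by
  have h : Real.cos (π / 3) ≤ Real.cos |π - t| :=
    Real.cos_le_cos_of_nonneg_of_le_pi (abs_nonneg _) (by linarith [Real.pi_pos])
      (abs_le.2 ⟨by linarith, by linarith⟩)
  rw [Real.cos_abs, Real.cos_pi_sub, Real.cos_pi_div_three] at h
  linarith

end TrigonometricBounds

namespace ZeroSumFreeProfile

open scoped Real

variable {N : ℕ} {x : ZMod 5 → ℕ}

theorem five_mul_cast_add_add_le (h : ZeroSumFreeProfile 5 N x) (hsmall : ∀ q, 2 * x q ≤ N)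
    {i j k : ZMod 5} (hijk : i + j + k = 0) : 5 * ((x i : ℝ) + x j + x k) ≤ 6 * N :=
  mod_cast h.add_add_le_of_two_mul_le hsmall hijk

theorem neg_re_sum_le (h : ZeroSumFreeProfile 5 N x) (hx : 3 * N < 2 * ∑ q, x q)
    (hsmall : ∀ q, 2 * x q ≤ N) :
    -(∑ j, x j * ZMod.stdAddChar j : ℂ).re ≤ 16 / 25 * N := by
  have hre := re_sum_stdAddChar_mul_exp x 0
  rw [show 6 * π / 5 + 0 = 2 * π - 4 * π / 5 by ring, Real.cos_two_pi_sub,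
    show 8 * π / 5 + 0 = 2 * π - 2 * π / 5 by ring, Real.cos_two_pi_sub] at hre
  simp only [Complex.ofReal_zero, zero_mul, Complex.exp_zero, mul_one, add_zero, Real.cos_zero]
    at hre
  have h₁ := three_tenths_le_cos_two_pi_div_five
  have h₂ := neg_le_cos_four_pi_div_five
  have hlower : (x 0 + x 1 * (3 / 10) + x 2 * (-(81 / 100)) + x 3 * (-(81 / 100)) +
      x 4 * (3 / 10) : ℝ) ≤ (∑ j, x j * ZMod.stdAddChar j : ℂ).re := by
    rw [hre]
    gcongr
  have hx' : 3 * (N : ℝ) < 2 * (x 0 + x 1 + x 2 + x 3 + x 4) := mod_cast sum_univ_zmod_five x ▸ hx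
  have hsmall' (q : ZMod 5) : 2 * (x q : ℝ) ≤ N := mod_cast hsmall q
  linarith [hsmall' 2, hsmall' 3, h.five_mul_cast_add_add_le hsmall (show 2 + 2 + 1 = 0 from rfl),
    h.five_mul_cast_add_add_le hsmall (show 3 + 3 + 4 = 0 from rfl)]

theorem re_sum_mul_exp_neg_le (h : ZeroSumFreeProfile 5 N x) (hx : 3 * N < 2 * ∑ q, x q)
    (hsmall : ∀ q, 2 * x q ≤ N) :
    ((∑ j, x j * ZMod.stdAddChar j) * Complex.exp ((-(π / 3) : ℝ) * Complex.I)).re ≤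
      16 / 25 * N := by
  have hpi := Real.pi_pos
  have h₀ : Real.cos (-(π / 3)) = 1 / 2 := by rw [Real.cos_neg, Real.cos_pi_div_three]
  have h₁ := Real.cos_le_one (2 * π / 5 + -(π / 3))
  have h₂ := cos_four_pi_div_five_sub_le
  have h₃ := cos_le_neg_half (t := 6 * π / 5 + -(π / 3)) (by linarith) (by linarith)
  have h₄ := cos_le_neg_half (t := 8 * π / 5 + -(π / 3)) (by linarith) (by linarith)
  rw [sub_eq_add_neg] at h₂
  have hupper : ((∑ j, x j * ZMod.stdAddChar j) *
      Complex.exp ((-(π / 3) : ℝ) * Complex.I)).re ≤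
      x 0 * (1 / 2) + x 1 * 1 + x 2 * (11 / 100) + x 3 * (-(1 / 2)) + x 4 * (-(1 / 2)) := by
    rw [re_sum_stdAddChar_mul_exp, h₀]
    gcongr
  have hx' : 3 * (N : ℝ) < 2 * (x 0 + x 1 + x 2 + x 3 + x 4) := mod_cast sum_univ_zmod_five x ▸ hx
  have hsmall' (q : ZMod 5) : 2 * (x q : ℝ) ≤ N := mod_cast hsmall q
  linarith [hsmall' 1, h.five_mul_cast_add_add_le hsmall (show 0 + 0 + 0 = 0 from rfl),
    h.five_mul_cast_add_add_le hsmall (show 2 + 2 + 1 = 0 from rfl)]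

theorem re_sum_mul_exp_le (h : ZeroSumFreeProfile 5 N x) (hx : 3 * N < 2 * ∑ q, x q)
    (hsmall : ∀ q, 2 * x q ≤ N) :
    ((∑ j, x j * ZMod.stdAddChar j) * Complex.exp ((π / 3 : ℝ) * Complex.I)).re ≤
      16 / 25 * N := by
  have hsum : ∑ q, x (-q) = ∑ q, x q := Equiv.sum_comp (Equiv.neg (ZMod 5)) x
  have hneg := (h.comp (-AddMonoidHom.id (ZMod 5))).re_sum_mul_exp_neg_le (hsum.symm ▸ hx)
    fun q ↦ hsmall (-q)
  have hconj : ∑ j, (x (-j) : ℂ) * ZMod.stdAddChar j =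
      starRingEnd ℂ (∑ j, x j * ZMod.stdAddChar j) := by
    rw [map_sum, ← Equiv.sum_comp (Equiv.neg (ZMod 5))]
    simp [AddChar.map_neg_eq_conj]
  have hexp : Complex.exp ((-(π / 3) : ℝ) * Complex.I) =
      starRingEnd ℂ (Complex.exp ((π / 3 : ℝ) * Complex.I)) := by
    rw [← Complex.exp_conj, map_mul, Complex.conj_ofReal, Complex.conj_I, Complex.ofReal_neg,
      neg_mul_comm]
  rwa [hexp, show ∑ j, ((x ∘ (-AddMonoidHom.id (ZMod 5))) j : ℂ) * ZMod.stdAddChar j =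
    starRingEnd ℂ (∑ j, x j * ZMod.stdAddChar j) from hconj, ← map_mul, Complex.conj_re] at hneg

theorem neg_re_sum_pow_three_le (h : ZeroSumFreeProfile 5 N x) (hx : 3 * N < 2 * ∑ q, x q)
    (hsmall : ∀ q, 2 * x q ≤ N) :
    -((∑ j, x j * ZMod.stdAddChar j) ^ 3 : ℂ).re ≤
      16 / 25 * N * Complex.normSq (∑ j, x j * ZMod.stdAddChar j) :=
  neg_re_pow_three_le (h.neg_re_sum_le hx hsmall) (h.re_sum_mul_exp_le hx hsmall)
    (h.re_sum_mul_exp_neg_le hx hsmall)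

end ZeroSumFreeProfile

section Fourier

variable {G : Type*} [AddCommGroup G]

/-- The Fourier coefficient of the indicator function of `A` at the character `ψ`, without
normalization. -/
noncomputable def charSum (A : Finset G) (ψ : AddChar G ℂ) : ℂ := ∑ a ∈ A, ψ a

theorem charSum_zero (A : Finset G) : charSum A 0 = #A := by
  simp [charSum]

theorem sum_charSum_pow_three [Finite G] [DecidableEq G] {A : Finset G}
    (h0 : 0 ∉ A + A + A) : ∑ ψ, charSum A ψ ^ 3 = 0 := by
  have hcube (ψ : AddChar G ℂ) :
      charSum A ψ ^ 3 = ∑ c ∈ A, ∑ b ∈ A, ∑ a ∈ A, ψ (a + b + c) := by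
    simp only [charSum, pow_succ, pow_zero, one_mul, sum_mul, mul_sum, AddChar.map_add_eq_mul]
  have := Fintype.ofFinite G
  simp only [hcube, sum_comm (s := univ), AddChar.sum_apply_eq_ite]
  exact sum_eq_zero fun c hc ↦ sum_eq_zero fun b hb ↦ sum_eq_zero fun a ha ↦
    if_neg fun (h : a + b + c = 0) ↦ h0 (h ▸ add_mem_add (add_mem_add ha hb) hc)

theorem sum_normSq_charSum [Finite G] (A : Finset G) :
    ∑ ψ, Complex.normSq (charSum A ψ) = Nat.card G * #A := by
  classical
  have := Fintype.ofFinite G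
  have hsq (ψ : AddChar G ℂ) :
      (Complex.normSq (charSum A ψ) : ℂ) = ∑ a ∈ A, ∑ b ∈ A, ψ (a - b) := by
    rw [← Complex.mul_conj, charSum, map_sum, sum_mul_sum]
    simp only [sub_eq_add_neg, AddChar.map_add_eq_mul, AddChar.map_neg_eq_conj]
  have h : ∑ ψ, (Complex.normSq (charSum A ψ) : ℂ) = Nat.card G * #A := by
    simp only [hsq]
    rw [sum_comm]
    simp only [sum_comm (s := univ), AddChar.sum_apply_eq_ite, sub_eq_zero, sum_ite_eq]
    simp [mul_comm, Nat.card_eq_fintype_card]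
  exact_mod_cast h

theorem card_sq_le_of_neg_re_charSum_pow_three_le [Finite G] [DecidableEq G] {A : Finset G} {c : ℝ}
    (hA : A.Nonempty) (h0 : 0 ∉ A + A + A)
    (hc : ∀ ψ ≠ 0, -(charSum A ψ ^ 3).re ≤ c * Complex.normSq (charSum A ψ)) :
    (#A : ℝ) ^ 2 ≤ c * (Nat.card G - #A) := by
  have hcube : (#A : ℝ) ^ 3 + ∑ ψ ∈ univ.erase 0, (charSum A ψ ^ 3).re = 0 := by
    have h := congr_arg Complex.re (sum_charSum_pow_three h0)
    rw [← add_sum_erase _ _ (mem_univ 0), Complex.add_re, Complex.re_sum, charSum_zero] at h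
    exact_mod_cast h
  have hsq : (#A : ℝ) ^ 2 + ∑ ψ ∈ univ.erase 0, Complex.normSq (charSum A ψ) =
      Nat.card G * #A := by
    rw [← sum_normSq_charSum, ← add_sum_erase _ _ (mem_univ 0), charSum_zero,
      Complex.normSq_natCast, pow_two]
  have hle : -∑ ψ ∈ univ.erase 0, (charSum A ψ ^ 3).re ≤
      c * ∑ ψ ∈ univ.erase 0, Complex.normSq (charSum A ψ) := by
    rw [← sum_neg_distrib, mul_sum]
    exact sum_le_sum fun ψ hψ ↦ hc ψ (ne_of_mem_erase hψ)
  have hpos : (0 : ℝ) < #A := mod_cast hA.card_pos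
  refine le_of_mul_le_mul_left ?_ hpos
  calc (#A : ℝ) * #A ^ 2 = -∑ ψ ∈ univ.erase 0, (charSum A ψ ^ 3).re := by linarith
    _ ≤ c * ∑ ψ ∈ univ.erase 0, Complex.normSq (charSum A ψ) := hle
    _ = #A * (c * (Nat.card G - #A)) := by
      rw [eq_sub_of_add_eq' hsq]
      ring

theorem charSum_compAddMonoidHom {Q : Type*} [AddCommGroup Q] [DecidableEq Q] [Fintype Q]
    (ψ : AddChar Q ℂ) (φ : G →+ Q) (A : Finset G) :
    charSum A (ψ.compAddMonoidHom φ) = ∑ q, fiberCard φ A q * ψ q := by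
  rw [charSum, ← sum_fiberwise_of_maps_to fun a _ ↦ mem_univ (φ a)]
  refine sum_congr rfl fun q _ ↦ ?_
  rw [fiberCard, ← nsmul_eq_mul]
  refine sum_eq_card_nsmul fun a ha ↦ ?_
  rw [AddChar.compAddMonoidHom_apply, (mem_filter.1 ha).2]

end Fourier

section Characters

variable {p : ℕ} [Fact p.Prime] {V : Type*} [AddCommGroup V] [Module (ZMod p) V] [Finite V]

theorem exists_eq_stdAddChar_compAddMonoidHom (ψ : AddChar V ℂ) :
    ∃ φ : V →+ ZMod p, ψ = ZMod.stdAddChar.compAddMonoidHom φ := by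
  have := Fintype.ofFinite V
  let f (φ : Module.Dual (ZMod p) V) : AddChar V ℂ :=
    ZMod.stdAddChar.compAddMonoidHom φ.toAddMonoidHom
  have hf : Function.Injective f :=
    (AddChar.compAddMonoidHom_injective_right _ ZMod.injective_stdAddChar).comp
      LinearMap.toAddMonoidHom_injective
  have hcard : Nat.card (AddChar V ℂ) ≤ Nat.card (Module.Dual (ZMod p) V) := by
    rw [Nat.card_eq_fintype_card, AddChar.card_eq, ← Nat.card_eq_fintype_card,
      Module.natCard_eq_pow_finrank (K := ZMod p) (V := V),
      Module.natCard_eq_pow_finrank (K := ZMod p) (V := Module.Dual (ZMod p) V),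
      Subspace.dual_finrank_eq]
  obtain ⟨φ, rfl⟩ := (hf.bijective_of_nat_card_le hcard).2 ψ
  exact ⟨φ.toAddMonoidHom, rfl⟩

end Characters

section Functionals

variable {p : ℕ} [Fact p.Prime] {G : Type*} [AddCommGroup G]

theorem surjective_of_ne_zero {φ : G →+ ZMod p} (hφ : φ ≠ 0) : Function.Surjective φ := by
  have : Fact (Nat.card (ZMod p)).Prime := by rwa [Nat.card_zmod]
  rw [← AddMonoidHom.range_eq_top]
  refine φ.range.eq_bot_or_eq_top_of_prime_card.resolve_left fun h ↦ hφ ?_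
  exact AddMonoidHom.range_eq_bot_iff.1 h

theorem index_ker_eq_of_ne_zero {φ : G →+ ZMod p} (hφ : φ ≠ 0) : φ.ker.index = p := by
  rw [AddSubgroup.index_ker, AddMonoidHom.range_eq_top.2 (surjective_of_ne_zero hφ),
    AddSubgroup.card_top, Nat.card_zmod]

theorem prime_mul_card_ker_of_ne_zero {φ : G →+ ZMod p} (hφ : φ ≠ 0) :
    p * Nat.card φ.ker = Nat.card G := by
  rw [← φ.ker.card_mul_index, index_ker_eq_of_ne_zero hφ, mul_comm]

end Functionals

section FiveGroup

variable {G : Type*} [AddCommGroup G] [Finite G] [DecidableEq G] {n : ℕ} {φ : G →+ ZMod 5}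
  {A : Finset G}

theorem exists_forall_eq_or_eq_of_lt_two_mul_fiberCard (hG : Nat.card G = 5 ^ n)
    (h0 : 0 ∉ A + A + A) (hA : 3 * Nat.card φ.ker < 2 * #A) {i : ZMod 5}
    (hi : Nat.card φ.ker < 2 * fiberCard φ A i) : ∃ j, ∀ a ∈ A, φ a = i ∨ φ a = j := by
  have hprofile := zeroSumFreeProfile_fiberCard Nat.prime_five hG φ h0
  obtain ⟨j, hj⟩ := hprofile.exists_support_of_lt_two_mul (by rwa [sum_fiberCard]) hi
  exact ⟨j, fun a ha ↦ hj _ (card_ne_zero.2 ⟨a, mem_filter.2 ⟨ha, rfl⟩⟩)⟩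

theorem neg_re_charSum_pow_three_le (hG : Nat.card G = 5 ^ n) (h0 : 0 ∉ A + A + A)
    (hA : 3 * Nat.card φ.ker < 2 * #A) (hsmall : ∀ i, 2 * fiberCard φ A i ≤ Nat.card φ.ker) :
    -(charSum A (ZMod.stdAddChar.compAddMonoidHom φ) ^ 3).re ≤
      16 / 25 * Nat.card φ.ker *
        Complex.normSq (charSum A (ZMod.stdAddChar.compAddMonoidHom φ)) := by
  rw [charSum_compAddMonoidHom]
  exact (zeroSumFreeProfile_fiberCard Nat.prime_five hG φ h0).neg_re_sum_pow_three_le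
    (by rwa [sum_fiberCard]) hsmall

end FiveGroup

section ElementaryAbelian

variable {V : Type*} [AddCommGroup V] [Module (ZMod 5) V] [Finite V] [DecidableEq V]

theorem exists_forall_eq_or_eq_of_zero_notMem_add_add {A : Finset V} (h0 : 0 ∉ A + A + A)
    (hA : 3 * Nat.card V < 10 * #A) :
    ∃ φ : V →+ ZMod 5, φ ≠ 0 ∧ ∃ i j, ∀ a ∈ A, φ a = i ∨ φ a = j := by
  by_contra! hno
  have : Fact (Nat.Prime 5) := ⟨Nat.prime_five⟩
  have hV : Nat.card V = 5 ^ Module.finrank (ZMod 5) V := by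
    rw [Module.natCard_eq_pow_finrank (K := ZMod 5), Nat.card_zmod]
  have hcoeff (ψ : AddChar V ℂ) (hψ : ψ ≠ 0) : -(charSum A ψ ^ 3).re ≤
      16 / 25 * (Nat.card V / 5) * Complex.normSq (charSum A ψ) := by
    obtain ⟨φ, rfl⟩ := exists_eq_stdAddChar_compAddMonoidHom (p := 5) ψ
    have hφ : φ ≠ 0 := by
      rintro rfl
      exact hψ (by ext; simp)
    have hker : 5 * Nat.card φ.ker = Nat.card V := prime_mul_card_ker_of_ne_zero hφ
    have hsmall (i : ZMod 5) : 2 * fiberCard φ A i ≤ Nat.card φ.ker := by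
      by_contra! hi
      obtain ⟨j, hj⟩ := exists_forall_eq_or_eq_of_lt_two_mul_fiberCard hV h0 (by lia) hi
      obtain ⟨a, ha, hai, haj⟩ := hno φ hφ i j
      exact (hj a ha).elim hai haj
    rw [← hker, Nat.cast_mul, Nat.cast_ofNat, mul_div_cancel_left₀ _ (by norm_num)]
    exact neg_re_charSum_pow_three_le hV h0 (by lia) hsmall
  have hle := card_sq_le_of_neg_re_charSum_pow_three_le (card_pos.1 (by lia)) h0 hcoeff
  have hA' : 3 * (Nat.card V : ℝ) < 10 * #A := mod_cast hA
  have hV' : (0 : ℝ) < Nat.card V := mod_cast Nat.card_pos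
  nlinarith [hle, hA', hV']

theorem exists_forall_eq_or_eq_of_notMem_add_add {A : Finset V} {g : V} (hg : g ∉ A + A + A)
    (hA : 3 * Nat.card V < 10 * #A) :
    ∃ φ : V →+ ZMod 5, φ ≠ 0 ∧ ∃ i j, ∀ a ∈ A, φ a = i ∨ φ a = j := by
  obtain ⟨t, ht⟩ : ∃ t : V, t + (t + t) = g := by
    refine ⟨(2 : ZMod 5) • g, ?_⟩
    rw [← add_smul, ← add_smul, show (2 : ZMod 5) + (2 + 2) = 1 from rfl, one_smul]
  have h0 : 0 ∉ (-t +ᵥ A) + (-t +ᵥ A) + (-t +ᵥ A) := by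
    simp only [vadd_add_assoc, add_vadd_comm, mem_neg_vadd_finset_iff, vadd_eq_add, add_zero]
    rwa [ht]
  obtain ⟨φ, hφ, i, j, hij⟩ := exists_forall_eq_or_eq_of_zero_notMem_add_add h0
    (by rwa [card_vadd_finset])
  refine ⟨φ, hφ, φ t + i, φ t + j, fun a ha ↦ ?_⟩
  simpa [neg_add_eq_iff_eq_add] using hij _ (vadd_mem_vadd_finset ha)

end ElementaryAbelian

theorem stmt0_general {V : Type*} [AddCommGroup V] [Module (ZMod 5) V] [Finite V] (A : Set V)
    (h3A : itSum 3 A ≠ Set.univ) (hA : 3 * Nat.card V < 10 * A.ncard) :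
    ∃ (F : AddSubgroup V) (c₁ c₂ : V),
      F.index = 5 ∧ A ⊆ (c₁ +ᵥ (F : Set V)) ∪ (c₂ +ᵥ (F : Set V)) := by
  classical
  have : Fact (Nat.Prime 5) := ⟨Nat.prime_five⟩
  lift A to Finset V using A.toFinite
  obtain ⟨g, hg⟩ := (Set.ne_univ_iff_exists_notMem _).1 h3A
  have hg' : g ∉ A + A + A := by
    simpa [itSum, ← coe_add] using hg
  rw [Set.ncard_coe_finset] at hA
  obtain ⟨φ, hφ, i, j, hij⟩ := exists_forall_eq_or_eq_of_notMem_add_add hg' hA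
  obtain ⟨c₁, rfl⟩ := surjective_of_ne_zero hφ i
  obtain ⟨c₂, rfl⟩ := surjective_of_ne_zero hφ j
  refine ⟨φ.ker, c₁, c₂, index_ker_eq_of_ne_zero hφ, fun a ha ↦ ?_⟩
  simpa only [Set.mem_union, Set.mem_vadd_set_iff_neg_vadd_mem, vadd_eq_add, SetLike.mem_coe,
    AddMonoidHom.mem_ker, map_add, map_neg, neg_add_eq_zero, @eq_comm _ (φ a)] using hij a ha

/-- If `A ⊆ (ℤ/5ℤ)ⁿ` satisfies `3A ≠ G` and `|A| > 3·5^(n-1)/2`, then `A` is contained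
in a union of two cosets of a subgroup of index 5. -/
theorem stmt0 (n : ℕ) (hn : 1 ≤ n) (A : Set (Fin n → ZMod 5))
    (h3A : itSum 3 A ≠ Set.univ)
    (hA : (A.ncard : ℝ) > 3 * 5 ^ (n - 1) / 2) :
    ∃ (F : AddSubgroup (Fin n → ZMod 5)) (c₁ c₂ : Fin n → ZMod 5),
      F.index = 5 ∧
      A ⊆ (c₁ +ᵥ (F : Set (Fin n → ZMod 5))) ∪ (c₂ +ᵥ (F : Set (Fin n → ZMod 5))) := by
  refine stmt0_general A h3A ?_
  obtain ⟨m, rfl⟩ := Nat.exists_eq_add_of_le' hn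
  rw [add_tsub_cancel_right] at hA
  have hcard : Nat.card (Fin (m + 1) → ZMod 5) = 5 * 5 ^ m := by simp [pow_succ']
  have : 3 * 5 ^ m < 2 * A.ncard := by
    rify
    linarith
  lia
end

section
/- For the elementary abelian group G = (ℤ/5ℤ)^n, N₃(G) = 2 if n = 1, and N₃(G) = (3·5^(n-1) − 1)/2 if n ≥ 2. -/
open Pointwise

/-- `Nk G k` is the largest size of an aperiodic subset `A ⊆ G` with `kA ≠ G` which is
maximal with this property; `0` if no such subset exists. -/
noncomputable def Nk (G : Type*) [AddCommGroup G] (k : ℕ) : ℕ :=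
  sSup {m : ℕ | ∃ A : Set G,
    {g : G | g +ᵥ A = A} = {0} ∧
    itSum k A ≠ Set.univ ∧
    (∀ g ∉ A, itSum k (A ∪ {g}) = Set.univ) ∧
    m = A.ncard}

/-
Upper bound. Suppose that `3A ≠ V` and `10|A| > 3|V|`; translate so that `0 ∉ 3A`. Kneser-type
inequalities inside a hyperplane restrict the sizes of the fibres of `A` under a nonzero functional.
If some fibre fills more than half of its coset, they force `A` into two parallel hyperplanes.
Otherwise the fibre sizes of every nonzero functional give a Fourier coefficient `z` with
`Re z³ ≥ -(3/25)|V||z|²`; as the cubes of all the coefficients sum to zero, Parseval's identity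
yields `|A|² ≤ (3/25)|V|(|V| - |A|)`, which contradicts the density. A maximal set inside two
parallel hyperplanes is equal to their union, hence periodic as soon as hyperplanes are nonzero. In
dimension one the hyperplanes are points, and the same dichotomy leaves at most two elements.

Lower bound. For a hyperplane `H`, an element `t ∉ H` and a partition `H \ {0} = B ⊔ -B`, the set
`{2t} ∪ (H \ {0}) ∪ (t + B)` misses `4t` in its threefold sumset. It is not contained in two
parallel hyperplanes, and any larger set is dense enough for the structure theorem above, so it is
maximal.
-/

section Sumsets

open Finset AddAction

variable {G : Type*} [AddCommGroup G]

theorem card_stabilizer_dvd_ncard (X : Set G) : Nat.card (stabilizer G X) ∣ X.ncard := by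
  have saturated :
      QuotientAddGroup.mk (s := stabilizer G X) ⁻¹' (QuotientAddGroup.mk '' X) = X := by
    refine subset_antisymm ?_ (Set.subset_preimage_image _ _)
    rintro y ⟨x, hx, hxy⟩
    have hmem := Set.vadd_mem_vadd_set (a := -x + y) hx
    rwa [mem_stabilizer_iff.mp (QuotientAddGroup.eq.mp hxy), vadd_eq_add,
      neg_add_cancel_comm] at hmem
  have hcard := Nat.card_congr (QuotientAddGroup.preimageMkEquivAddSubgroupProdSet
    (stabilizer G X) (QuotientAddGroup.mk '' X))
  rw [saturated, Nat.card_coe_set_eq, Nat.card_prod] at hcard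
  exact hcard ▸ dvd_mul_right _ _

variable [DecidableEq G]

theorem exists_addSubgroup_mul_card_le_card_add (F : AddSubgroup G) [Finite F] {X Y : Finset G}
    (hX : X.Nonempty) (hY : Y.Nonempty) (hYF : ∀ y ∈ Y, ∀ y' ∈ Y, y - y' ∈ F) :
    ∃ H ≤ F, ∃ k, 0 < k ∧ k * Nat.card H ≤ #(X + Y) ∧ #X + #Y ≤ (k + 1) * Nat.card H := by
  -- Dyson transforms of `(X, Y)` shrink `Y` until it lies in one coset of the stabilizer of `X`.
  induction Y using Finset.strongInduction generalizing X with | H Y ih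
  by_cases hstab : ∀ y ∈ Y, ∀ y' ∈ Y, y' - y ∈ stabilizer G (X : Set G)
  · obtain ⟨y₀, hy₀⟩ := hY
    let H := stabilizer G (X : Set G) ⊓ F
    have : Finite H := Finite.of_injective _ (AddSubgroup.inclusion_injective inf_le_right)
    obtain ⟨k, hk⟩ : Nat.card H ∣ #X :=
      (AddSubgroup.card_dvd_of_le inf_le_left).trans <|
        (card_stabilizer_dvd_ncard (X : Set G)).trans (by rw [Set.ncard_coe_finset])
    have hYH : #Y ≤ Nat.card H := by
      rw [← Set.ncard_coe_finset, ← SetLike.coe_sort_coe, Nat.card_coe_set_eq]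
      exact Set.ncard_le_ncard_of_injOn (· - y₀)
        (fun y hy ↦ ⟨hstab _ hy₀ _ hy, hYF _ hy _ hy₀⟩) sub_left_injective.injOn
    refine ⟨H, inf_le_right, k, ?_, ?_, ?_⟩
    · exact Nat.pos_of_mul_pos_left (hk ▸ hX.card_pos)
    · rw [mul_comm, ← hk]
      exact card_le_card_add_right ⟨y₀, hy₀⟩
    · linarith
  · simp only [mem_stabilizer_set' X.finite_toSet, not_forall] at hstab
    obtain ⟨y, hy, y', hy', x, hx, hx'⟩ := hstab
    let e := x - y
    let T := addDysonETransform e (X, Y)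
    have hT_ssubset : T.2 ⊂ Y := by
      refine ssubset_of_subset_not_subset inter_subset_left fun h ↦ hx' ?_
      obtain ⟨z, hz, hzy⟩ := mem_vadd_finset.mp (mem_of_mem_inter_right (h hy'))
      have hxz : (y' - y) +ᵥ x = z := by
        simp only [← hzy, e, vadd_eq_add]
        abel
      exact hxz ▸ hz
    have hyT : y ∈ T.2 := mem_inter.mpr ⟨hy, mem_vadd_finset.mpr ⟨x, hx, by simp [e]⟩⟩
    obtain ⟨H, hHF, k, hk, hsum, hcard⟩ := ih T.2 hT_ssubset (hX.mono subset_union_left) ⟨y, hyT⟩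
      fun a ha b hb ↦ hYF a (hT_ssubset.1 ha) b (hT_ssubset.1 hb)
    refine ⟨H, hHF, k, hk, hsum.trans (card_le_card (addDysonETransform.subset e (X, Y))), ?_⟩
    exact (addDysonETransform.card e (X, Y)).symm.trans_le hcard

theorem mul_card_le_mul_card_add {p r m : ℕ} (hp : p.Prime) {F : AddSubgroup G}
    (hF : Nat.card F = p ^ r) {X Y : Finset G} (hX : X.Nonempty) (hY : Y.Nonempty)
    (hYF : ∀ y ∈ Y, ∀ y' ∈ Y, y - y' ∈ F) (hm : m ≤ p)
    (h : m * Nat.card F < p * (#X + #Y)) : m * Nat.card F ≤ p * #(X + Y) := by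
  have : Finite F := Nat.finite_of_card_ne_zero (hF ▸ (pow_pos hp.pos r).ne')
  obtain ⟨H, hHF, k, hk, hsum, hcard⟩ := exists_addSubgroup_mul_card_le_card_add F hX hY hYF
  obtain ⟨i, hi, hHi⟩ := (Nat.dvd_prime_pow hp).mp (hF ▸ AddSubgroup.card_dvd_of_le hHF)
  obtain rfl | hir := hi.eq_or_lt
  · calc m * Nat.card F = m * (1 * Nat.card H) := by rw [hF, hHi, one_mul]
      _ ≤ p * (k * Nat.card H) := by gcongr; exact hk
      _ ≤ p * #(X + Y) := by gcongr
  · have hFH : Nat.card F = p * (p ^ (r - i - 1) * Nat.card H) := by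
      rw [hF, hHi, ← pow_add, ← pow_succ']
      congr 1
      omega
    have hk : m * p ^ (r - i - 1) < k + 1 := by
      refine lt_of_mul_lt_mul_right (a := Nat.card H) ?_ (Nat.zero_le _)
      refine lt_of_mul_lt_mul_left (a := p) ?_ (Nat.zero_le _)
      calc p * (m * p ^ (r - i - 1) * Nat.card H) = m * Nat.card F := by rw [hFH]; ring
        _ < p * (#X + #Y) := h
        _ ≤ p * ((k + 1) * Nat.card H) := by gcongr
    calc m * Nat.card F = p * (m * p ^ (r - i - 1) * Nat.card H) := by rw [hFH]; ring
      _ ≤ p * (k * Nat.card H) := by gcongr; omega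
      _ ≤ p * #(X + Y) := by gcongr

end Sumsets

section CharacterSums

open Finset ComplexConjugate

variable {K V : Type*} [Field K] [AddCommGroup V] [Module K V]

/-- The Fourier coefficient of the indicator function of `A` at the character `e ∘ φ`. For `e ≠ 1`
fixed, every character of a finite `V` over a prime field has this form for exactly one `φ`. -/
noncomputable def dualSum (e : AddChar K ℂ) (A : Finset V) (φ : Module.Dual K V) : ℂ :=
  ∑ x ∈ A, e (φ x)

theorem dualSum_zero (e : AddChar K ℂ) (A : Finset V) : dualSum e A 0 = #A := by
  simp [dualSum]

variable [Finite V]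

theorem natCard_dual : Nat.card (Module.Dual K V) = Nat.card V :=
  (Nat.card_congr (Module.finBasis K V).toDualEquiv.toEquiv).symm

variable {e : AddChar K ℂ}

theorem sum_dual_apply_eq_ite [Fintype (Module.Dual K V)] [DecidableEq V] (he : e ≠ 1) (v : V) :
    ∑ φ : Module.Dual K V, e (φ v) = if v = 0 then (Nat.card V : ℂ) else 0 := by
  split_ifs with hv
  · simp [hv, ← natCard_dual (K := K), Nat.card_eq_fintype_card]
  · obtain ⟨a, ha⟩ := AddChar.ne_one_iff.mp he
    obtain ⟨φ, hφ⟩ : ∃ φ : Module.Dual K V, φ v ≠ 0 := by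
      simpa using (Module.forall_dual_apply_eq_zero_iff K v).not.mpr hv
    let ψ : AddChar (Module.Dual K V) ℂ :=
      e.compAddMonoidHom (Module.Dual.eval K V v).toAddMonoidHom
    refine AddChar.sum_eq_zero_iff_ne_zero (ψ := ψ).mpr ?_
    refine AddChar.ne_one_iff.mpr ⟨(a / φ v) • φ, ?_⟩
    simpa [ψ, div_mul_cancel₀ a hφ] using ha

theorem sum_dualSum_pow_three [Fintype (Module.Dual K V)] [DecidableEq V] (he : e ≠ 1)
    {A : Finset V} (hA : 0 ∉ A + A + A) :
    ∑ φ, dualSum e A φ ^ 3 = 0 := by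
  have expand (φ : Module.Dual K V) :
      dualSum e A φ ^ 3 = ∑ x ∈ A, ∑ y ∈ A, ∑ z ∈ A, e (φ (x + y + z)) := by
    simp only [map_add, AddChar.map_add_eq_mul, ← mul_sum, ← sum_mul]
    rw [pow_three', dualSum]
  simp only [expand, sum_comm (s := univ), sum_dual_apply_eq_ite he]
  refine sum_eq_zero fun x hx ↦ sum_eq_zero fun y hy ↦ sum_eq_zero fun z hz ↦ if_neg fun h ↦ hA ?_
  exact h ▸ add_mem_add (add_mem_add hx hy) hz

variable [Finite K]

theorem sum_norm_dualSum_sq [Fintype (Module.Dual K V)] (he : e ≠ 1) (A : Finset V) :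
    ∑ φ, ‖dualSum e A φ‖ ^ 2 = Nat.card V * #A := by
  classical
  have expand (φ : Module.Dual K V) :
      ((‖dualSum e A φ‖ ^ 2 : ℝ) : ℂ) = ∑ x ∈ A, ∑ y ∈ A, e (φ (x - y)) := by
    rw [Complex.ofReal_pow, ← Complex.mul_conj', dualSum, map_sum, sum_mul_sum]
    simp only [sub_eq_add_neg, map_add, map_neg, AddChar.map_add_eq_mul,
      AddChar.map_neg_eq_conj]
  rw [← Complex.ofReal_inj]
  push_cast
  simp only [← Complex.ofReal_pow, expand]
  rw [sum_comm]
  simp only [sum_comm (s := univ), sum_dual_apply_eq_ite he, sub_eq_zero, sum_ite_eq]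
  simp [mul_comm]

theorem card_sq_le_of_re_dualSum_pow_three [DecidableEq V] (he : e ≠ 1) {A : Finset V}
    (hne : A.Nonempty) (hA : 0 ∉ A + A + A) {r : ℝ}
    (h : ∀ φ ≠ 0, -r * ‖dualSum e A φ‖ ^ 2 ≤ (dualSum e A φ ^ 3).re) :
    (#A : ℝ) ^ 2 ≤ r * (Nat.card V - #A) := by
  have := Module.finite_of_finite K (M := Module.Dual K V)
  have := Fintype.ofFinite (Module.Dual K V)
  classical
  have hpos : (0 : ℝ) < #A := by exact_mod_cast hne.card_pos
  have hsq := sum_norm_dualSum_sq he A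
  have hcube := congrArg Complex.re (sum_dualSum_pow_three he hA)
  rw [Complex.re_sum, Complex.zero_re] at hcube
  rw [← add_sum_erase _ _ (mem_univ 0), dualSum_zero] at hsq hcube
  have hsum := sum_le_sum fun φ hφ ↦ h φ (ne_of_mem_erase (s := univ) hφ)
  rw [← mul_sum] at hsum
  norm_cast at hsq hcube
  refine le_of_mul_le_mul_left ?_ hpos
  push_cast at hsq hcube
  rw [eq_sub_of_add_eq' hsq, eq_sub_of_add_eq' hcube] at hsum
  linarith

end CharacterSums

theorem four_mul_mul_mul_le_of_add_eq_zero {a b c r : ℝ} (hsum : a + b + c = 0)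
    (ha : a ≤ r) (hb : b ≤ r) (hc : c ≤ r) :
    4 * (a * b * c) ≤ 2 / 3 * r * (a ^ 2 + b ^ 2 + c ^ 2) := by
  have of_mul_nonneg {x y z : ℝ} (hxyz : x + y + z = 0) (hx : x ≤ r) (hyz : 0 ≤ y * z) :
      4 * (x * y * z) ≤ 2 / 3 * r * (x ^ 2 + y ^ 2 + z ^ 2) := by
    have hr : 0 ≤ r := by linarith
    calc 4 * (x * y * z) = 4 * (x * (y * z)) := by ring
      _ ≤ 4 * (r * (y * z)) := by gcongr
      _ ≤ 4 * (r * (y * z)) + 4 / 3 * (r * (y - z) ^ 2) :=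
        le_add_of_nonneg_right (by positivity)
      _ = 2 / 3 * r * (x ^ 2 + y ^ 2 + z ^ 2) := by
        rw [show x = -(y + z) by linarith]
        ring
  obtain h | h | h : 0 ≤ b * c ∨ 0 ≤ c * a ∨ 0 ≤ a * b := by
    by_contra! h
    nlinarith [mul_pos_of_neg_of_neg h.1 h.2.1, sq_nonneg c]
  · exact of_mul_nonneg hsum ha h
  · linarith [of_mul_nonneg (by linarith) hb h]
  · linarith [of_mul_nonneg (by linarith) hc h]

theorem neg_mul_norm_sq_le_re_pow_three_of_le {z : ℂ} {r : ℝ} (h : -r ≤ z.re)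
    (hadd : z.re + √3 * z.im ≤ 2 * r) (hsub : z.re - √3 * z.im ≤ 2 * r) :
    -r * ‖z‖ ^ 2 ≤ (z ^ 3).re := by
  have hsqrt : √3 ^ 2 = 3 := Real.sq_sqrt zero_le_three
  -- The factors are the real parts of the products of `z` with the cube roots of `-1`.
  have hre : (z ^ 3).re =
      -4 * (-z.re * ((z.re + √3 * z.im) / 2) * ((z.re - √3 * z.im) / 2)) := by
    simp only [pow_three, Complex.mul_re, Complex.mul_im]
    linear_combination z.re * z.im ^ 2 * hsqrt
  have hnorm : ‖z‖ ^ 2 =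
      2 / 3 * ((-z.re) ^ 2 + ((z.re + √3 * z.im) / 2) ^ 2 + ((z.re - √3 * z.im) / 2) ^ 2) := by
    rw [Complex.sq_norm, Complex.normSq_apply]
    linear_combination -z.im ^ 2 / 3 * hsqrt
  have := four_mul_mul_mul_le_of_add_eq_zero (a := -z.re) (b := (z.re + √3 * z.im) / 2)
    (c := (z.re - √3 * z.im) / 2) (r := r) (by ring) (by linarith) (by linarith) (by linarith)
  rw [hre, hnorm]
  linarith

section FifthRootsOfUnity

open Real ComplexConjugate

theorem cos_pi_div_five_mem_Icc : cos (π / 5) ∈ Set.Icc 0.809 0.81 := by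
  have hl : 2.236 ≤ √5 := Real.le_sqrt_of_sq_le (by norm_num)
  have hu : √5 ≤ 2.24 := Real.sqrt_le_iff.mpr (by norm_num)
  rw [cos_pi_div_five]
  constructor <;> linarith

theorem cos_two_pi_div_five_mem_Icc : cos (2 * π / 5) ∈ Set.Icc 0.309 0.31 := by
  have hsqrt : √5 ^ 2 = 5 := Real.sq_sqrt (by norm_num)
  have hcos : cos (2 * π / 5) = cos (π / 5) - 1 / 2 := by
    rw [show 2 * π / 5 = 2 * (π / 5) by ring, cos_two_mul, cos_pi_div_five]
    linear_combination hsqrt / 8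
  obtain ⟨hl, hu⟩ := cos_pi_div_five_mem_Icc
  constructor <;> linarith

theorem sqrt_three_mul_sin {x : ℝ} (h0 : 0 ≤ x) (hπ : x ≤ π) :
    √3 * sin x = √(3 * (1 - cos x ^ 2)) := by
  rw [sin_eq_sqrt_one_sub_cos_sq h0 hπ, sqrt_mul zero_le_three]

theorem sqrt_three_mul_sin_pi_div_five_mem_Icc : √3 * sin (π / 5) ∈ Set.Icc 1 1.02 := by
  obtain ⟨hl, hu⟩ := cos_pi_div_five_mem_Icc
  rw [sqrt_three_mul_sin (by positivity) (by linarith [pi_pos])]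
  exact ⟨le_sqrt_of_sq_le (by nlinarith), sqrt_le_iff.mpr ⟨by norm_num, by nlinarith⟩⟩

theorem sqrt_three_mul_sin_two_pi_div_five_mem_Icc :
    √3 * sin (2 * π / 5) ∈ Set.Icc 1.64 1.65 := by
  obtain ⟨hl, hu⟩ := cos_two_pi_div_five_mem_Icc
  rw [sqrt_three_mul_sin (by positivity) (by linarith [pi_pos])]
  exact ⟨le_sqrt_of_sq_le (by nlinarith), sqrt_le_iff.mpr ⟨by norm_num, by nlinarith⟩⟩

theorem stdAddChar_zmod_five_one :
    ZMod.stdAddChar (1 : ZMod 5) = ⟨cos (2 * π / 5), sin (2 * π / 5)⟩ := by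
  have harg : 2 * π * Complex.I * (1 : ℤ) / (5 : ℕ) = (2 * π / 5 : ℝ) * Complex.I := by
    push_cast
    ring
  rw [← Int.cast_one, ZMod.stdAddChar_coe, harg, Complex.exp_mul_I, ← Complex.ofReal_cos,
    ← Complex.ofReal_sin, ← Complex.mk_eq_add_mul_I]

theorem stdAddChar_zmod_five_two :
    ZMod.stdAddChar (2 : ZMod 5) = ⟨-cos (π / 5), sin (π / 5)⟩ := by
  have harg : 2 * π * Complex.I * (2 : ℤ) / (5 : ℕ) = (π - π / 5 : ℝ) * Complex.I := by
    push_cast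
    ring
  rw [← Int.cast_ofNat, ZMod.stdAddChar_coe, harg, Complex.exp_mul_I, ← Complex.ofReal_cos,
    ← Complex.ofReal_sin, ← Complex.mk_eq_add_mul_I, cos_pi_sub, sin_pi_sub]

theorem sum_mul_stdAddChar_zmod_five (c : ZMod 5 → ℝ) :
    ∑ i, (c i : ℂ) * ZMod.stdAddChar i =
      ⟨c 0 + cos (2 * π / 5) * (c 1 + c 4) - cos (π / 5) * (c 2 + c 3),
        sin (2 * π / 5) * (c 1 - c 4) + sin (π / 5) * (c 2 - c 3)⟩ := by
  have h3 : ZMod.stdAddChar (3 : ZMod 5) = conj (ZMod.stdAddChar (2 : ZMod 5)) :=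
    AddChar.map_neg_eq_conj _ (2 : ZMod 5)
  have h4 : ZMod.stdAddChar (4 : ZMod 5) = conj (ZMod.stdAddChar (1 : ZMod 5)) :=
    AddChar.map_neg_eq_conj _ (1 : ZMod 5)
  have expand : ∑ i, (c i : ℂ) * ZMod.stdAddChar i = c 0 * ZMod.stdAddChar (0 : ZMod 5) +
      c 1 * ZMod.stdAddChar (1 : ZMod 5) + c 2 * ZMod.stdAddChar (2 : ZMod 5) +
      c 3 * ZMod.stdAddChar (3 : ZMod 5) + c 4 * ZMod.stdAddChar (4 : ZMod 5) :=
    Fin.sum_univ_five _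
  rw [expand, h3, h4, stdAddChar_zmod_five_one, stdAddChar_zmod_five_two,
    AddChar.map_zero_eq_one]
  apply Complex.ext <;> simp <;> ring

end FifthRootsOfUnity

/-- The constraints met by the densities, inside the fibres of a nonzero functional, of a set `A`
with `0 ∉ A + A + A` and density more than `3 / 10`, when no fibre is more than half full. -/
structure SliceProfile (c : ZMod 5 → ℝ) : Prop where
  nonneg : ∀ i, 0 ≤ c i
  le_half : ∀ i, c i ≤ 1 / 2
  triple_le : ∀ i j k, i + j + k = 0 → c i + c j + c k ≤ 6 / 5
  le_sum : 3 / 2 ≤ ∑ i, c i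

namespace SliceProfile

open Real

variable {c : ZMod 5 → ℝ}

theorem comp_neg (h : SliceProfile c) : SliceProfile fun i ↦ c (-i) where
  nonneg _ := h.nonneg _
  le_half _ := h.le_half _
  triple_le i j k hijk := h.triple_le _ _ _ (by rw [← neg_add, ← neg_add, hijk, neg_zero])
  le_sum := h.le_sum.trans_eq (Equiv.sum_comp (Equiv.neg _) c).symm

theorem neg_le_re (h : SliceProfile c) :
    -(3 / 5) ≤ c 0 + cos (2 * π / 5) * (c 1 + c 4) - cos (π / 5) * (c 2 + c 3) := by
  have h14 : 0.309 * (c 1 + c 4) ≤ cos (2 * π / 5) * (c 1 + c 4) :=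
    mul_le_mul_of_nonneg_right cos_two_pi_div_five_mem_Icc.1 (add_nonneg (h.nonneg 1) (h.nonneg 4))
  have h23 : cos (π / 5) * (c 2 + c 3) ≤ 0.81 * (c 2 + c 3) :=
    mul_le_mul_of_nonneg_right cos_pi_div_five_mem_Icc.2 (add_nonneg (h.nonneg 2) (h.nonneg 3))
  have hsum : 3 / 2 ≤ c 0 + c 1 + c 2 + c 3 + c 4 := h.le_sum.trans_eq (Fin.sum_univ_five c)
  linarith [h.nonneg 1, h.nonneg 4, h.le_half 2, h.le_half 3, h.triple_le 2 2 1 rfl,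
    h.triple_le 3 3 4 rfl]

theorem re_add_sqrt_three_mul_im_le (h : SliceProfile c) :
    c 0 + cos (2 * π / 5) * (c 1 + c 4) - cos (π / 5) * (c 2 + c 3) +
      √3 * (sin (2 * π / 5) * (c 1 - c 4) + sin (π / 5) * (c 2 - c 3)) ≤ 6 / 5 := by
  obtain ⟨hcos₁, -⟩ := cos_pi_div_five_mem_Icc
  obtain ⟨-, hcos₂⟩ := cos_two_pi_div_five_mem_Icc
  obtain ⟨hsin₁, hsin₁'⟩ := sqrt_three_mul_sin_pi_div_five_mem_Icc
  obtain ⟨hsin₂, hsin₂'⟩ := sqrt_three_mul_sin_two_pi_div_five_mem_Icc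
  have h1 : (cos (2 * π / 5) + √3 * sin (2 * π / 5)) * c 1 ≤ 1.96 * c 1 :=
    mul_le_mul_of_nonneg_right (by linarith) (h.nonneg 1)
  have h2 : (√3 * sin (π / 5) - cos (π / 5)) * c 2 ≤ 0.22 * c 2 :=
    mul_le_mul_of_nonneg_right (by linarith) (h.nonneg 2)
  have h3 : (-cos (π / 5) - √3 * sin (π / 5)) * c 3 ≤ -1.8 * c 3 :=
    mul_le_mul_of_nonneg_right (by linarith) (h.nonneg 3)
  have h4 : (cos (2 * π / 5) - √3 * sin (2 * π / 5)) * c 4 ≤ -1.3 * c 4 :=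
    mul_le_mul_of_nonneg_right (by linarith) (h.nonneg 4)
  have hsum : 3 / 2 ≤ c 0 + c 1 + c 2 + c 3 + c 4 := h.le_sum.trans_eq (Fin.sum_univ_five c)
  linarith [h.nonneg 3, h.le_half 1, h.triple_le 0 0 0 rfl, h.triple_le 2 2 1 rfl]

theorem neg_mul_norm_sq_le_re_pow_three (h : SliceProfile c) :
    -(3 / 5) * ‖∑ i, (c i : ℂ) * ZMod.stdAddChar i‖ ^ 2 ≤
      ((∑ i, (c i : ℂ) * ZMod.stdAddChar i) ^ 3).re := by
  have hneg := h.comp_neg.re_add_sqrt_three_mul_im_le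
  change c 0 + _ * (c 4 + c 1) - _ * (c 3 + c 2) + _ * (_ * (c 4 - c 1) + _ * (c 3 - c 2)) ≤ _
    at hneg
  refine neg_mul_norm_sq_le_re_pow_three_of_le ?_ ?_ ?_ <;> rw [sum_mul_stdAddChar_zmod_five]
  · exact h.neg_le_re
  · exact h.re_add_sqrt_three_mul_im_le.trans_eq (by norm_num)
  · linarith

end SliceProfile

section Slices

open Finset Module

theorem card_le_natCard_ker {R V W : Type*} [Ring R] [AddCommGroup V] [Module R V] [Finite V]
    [AddCommGroup W] [Module R W] {f : V →ₗ[R] W} {S : Finset V} {w : W} (hS : ∀ x ∈ S, f x = w) :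
    #S ≤ Nat.card f.ker := by
  obtain rfl | ⟨s, hs⟩ := S.eq_empty_or_nonempty
  · simp
  · rw [← Set.ncard_coe_finset, ← SetLike.coe_sort_coe, Nat.card_coe_set_eq]
    refine Set.ncard_le_ncard_of_injOn (· - s) (fun x hx ↦ ?_) sub_left_injective.injOn
    simp [hS x hx, hS s hs]

variable {p : ℕ} {V : Type*} [AddCommGroup V] [Module (ZMod p) V]

/-- The part of `A` lying in the fibre of the functional `φ` over `i`. -/
def dualSlice (A : Finset V) (φ : Dual (ZMod p) V) (i : ZMod p) : Finset V :=
  {x ∈ A | φ x = i}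

theorem mem_dualSlice {A : Finset V} {φ : Dual (ZMod p) V} {i : ZMod p} {x : V} :
    x ∈ dualSlice A φ i ↔ x ∈ A ∧ φ x = i :=
  mem_filter

variable [Fact p.Prime]

theorem sum_card_dualSlice (A : Finset V) (φ : Dual (ZMod p) V) : ∑ i, #(dualSlice A φ i) = #A :=
  sum_card_fiberwise_eq_card_filter A univ φ |>.trans (by simp)

theorem dualSum_eq_sum_dualSlice (e : AddChar (ZMod p) ℂ) (A : Finset V) (φ : Dual (ZMod p) V) :
    dualSum e A φ = ∑ i, #(dualSlice A φ i) * e i := by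
  rw [dualSum, ← sum_fiberwise A φ]
  refine sum_congr rfl fun i _ ↦ ?_
  rw [sum_congr rfl fun x hx ↦ congrArg e (mem_filter.mp hx).2, sum_const, nsmul_eq_mul, dualSlice]

variable {φ : Dual (ZMod p) V}

theorem dualSlice_inv_smul_one {A : Finset V} {i : ZMod p} (hi : i ≠ 0) :
    dualSlice A (i⁻¹ • φ) 1 = dualSlice A φ i := by
  simp only [dualSlice, LinearMap.smul_apply, smul_eq_mul, inv_mul_eq_one₀ hi, eq_comm (a := i)]

theorem mul_natCard_ker (hφ : φ ≠ 0) : p * Nat.card φ.ker = Nat.card V := by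
  rw [φ.ker.card_eq_card_quotient_mul_card,
    Nat.card_congr (φ.quotKerEquivOfSurjective (LinearMap.surjective hφ)).toEquiv,
    Nat.card_zmod, mul_comm]

variable [Finite V] {A : Finset V} {i j k : ZMod p}

theorem card_dualSlice_add_add_card_le_natCard_ker [DecidableEq V] (hA : 0 ∉ A + A + A)
    (hijk : i + j + k = 0) :
    #(dualSlice A φ i + dualSlice A φ j) + #(dualSlice A φ k) ≤ Nat.card φ.ker := by
  have hdisj : Disjoint (dualSlice A φ i + dualSlice A φ j) (-dualSlice A φ k) := by
    refine disjoint_left.mpr fun _ hxy hz ↦ hA ?_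
    obtain ⟨x, hx, y, hy, rfl⟩ := mem_add.mp hxy
    have hxyz := add_mem_add (add_mem_add (mem_dualSlice.mp hx).1 (mem_dualSlice.mp hy).1)
      (mem_dualSlice.mp (mem_neg'.mp hz)).1
    rwa [add_neg_cancel] at hxyz
  rw [← card_neg (dualSlice A φ k), ← card_union_of_disjoint hdisj]
  refine card_le_natCard_ker (w := i + j) fun v hv ↦ ?_
  obtain hv | hv := mem_union.mp hv
  · obtain ⟨x, hx, y, hy, rfl⟩ := mem_add.mp hv
    rw [map_add, (mem_dualSlice.mp hx).2, (mem_dualSlice.mp hy).2]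
  · rw [← neg_neg (φ v), ← map_neg, (mem_dualSlice.mp (mem_neg'.mp hv)).2,
      eq_neg_of_add_eq_zero_left hijk]

theorem mul_natCard_ker_le_mul_card_dualSlice_add [DecidableEq V] {m : ℕ} (hm : m ≤ p)
    (hi : (dualSlice A φ i).Nonempty) (hj : (dualSlice A φ j).Nonempty)
    (h : m * Nat.card φ.ker < p * (#(dualSlice A φ i) + #(dualSlice A φ j))) :
    m * Nat.card φ.ker ≤ p * #(dualSlice A φ i + dualSlice A φ j) := by
  have hker : Nat.card φ.ker.toAddSubgroup = p ^ finrank (ZMod p) φ.ker :=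
    (natCard_eq_pow_finrank (K := ZMod p) (V := φ.ker)).trans (by rw [Nat.card_zmod])
  refine mul_card_le_mul_card_add Fact.out hker hi hj (fun y hy y' hy' ↦ ?_) hm h
  rw [Submodule.mem_toAddSubgroup, LinearMap.mem_ker, map_sub, (mem_dualSlice.mp hy).2,
    (mem_dualSlice.mp hy').2, sub_self]

theorem mul_natCard_ker_add_mul_card_dualSlice_le [DecidableEq V] (hA : 0 ∉ A + A + A)
    (hijk : i + j + k = 0) {m : ℕ} (hm : m ≤ p) (hi : (dualSlice A φ i).Nonempty)
    (hj : (dualSlice A φ j).Nonempty)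
    (h : m * Nat.card φ.ker < p * (#(dualSlice A φ i) + #(dualSlice A φ j))) :
    m * Nat.card φ.ker + p * #(dualSlice A φ k) ≤ p * Nat.card φ.ker :=
  calc m * Nat.card φ.ker + p * #(dualSlice A φ k)
    _ ≤ p * #(dualSlice A φ i + dualSlice A φ j) + p * #(dualSlice A φ k) :=
      Nat.add_le_add_right (mul_natCard_ker_le_mul_card_dualSlice_add hm hi hj h) _
    _ ≤ p * Nat.card φ.ker := by
      rw [← mul_add]
      exact Nat.mul_le_mul_left p (card_dualSlice_add_add_card_le_natCard_ker hA hijk)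

theorem dualSlice_eq_empty_of_lt_card_dualSlice [DecidableEq V] (hA : 0 ∉ A + A + A)
    (hiik : i + i + k = 0) (hi : Nat.card φ.ker < 2 * #(dualSlice A φ i)) :
    dualSlice A φ k = ∅ := by
  have hp : 0 < p := (Fact.out : p.Prime).pos
  have hi_ne : (dualSlice A φ i).Nonempty := card_pos.mp (by omega)
  have hle := mul_natCard_ker_add_mul_card_dualSlice_le hA hiik le_rfl hi_ne hi_ne
    (Nat.mul_lt_mul_of_pos_left (by omega) hp)
  have hk : p * #(dualSlice A φ k) = 0 := by omega
  exact card_eq_zero.mp ((Nat.mul_eq_zero.mp hk).resolve_left hp.ne')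

theorem mul_card_dualSlice_add_add_le [DecidableEq V] (hA : 0 ∉ A + A + A) (hijk : i + j + k = 0)
    (hi : (dualSlice A φ i).Nonempty) (hj : (dualSlice A φ j).Nonempty)
    (hk : (dualSlice A φ k).Nonempty) :
    p * (#(dualSlice A φ i) + #(dualSlice A φ j) + #(dualSlice A φ k)) ≤
      (p + 1) * Nat.card φ.ker := by
  have hp : 0 < p := (Fact.out : p.Prime).pos
  set s := p * (#(dualSlice A φ i) + #(dualSlice A φ j)) with hs
  have hle : s ≤ p * Nat.card φ.ker := by
    by_contra! h
    have := mul_natCard_ker_add_mul_card_dualSlice_le hA hijk le_rfl hi hj h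
    have := Nat.mul_pos hp hk.card_pos
    omega
  have hs_pos : 0 < s := Nat.mul_pos hp (Nat.add_pos_left hi.card_pos _)
  obtain ⟨m, hm, hm'⟩ : ∃ m, m * Nat.card φ.ker < s ∧ s ≤ (m + 1) * Nat.card φ.ker := by
    refine ⟨(s - 1) / Nat.card φ.ker, ?_, ?_⟩
    · have := Nat.div_mul_le_self (s - 1) (Nat.card φ.ker)
      omega
    · have := Nat.lt_div_mul_add (a := s - 1) (b := Nat.card φ.ker) Nat.card_pos
      rw [add_one_mul]
      omega
  have hmp : m ≤ p := (lt_of_mul_lt_mul_right (hm.trans_le hle) (Nat.zero_le _)).le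
  have := mul_natCard_ker_add_mul_card_dualSlice_le hA hijk hmp hi hj hm
  linarith

end Slices

section Density

open Finset Module

theorem fact_prime_five : Fact (Nat.Prime 5) :=
  ⟨Nat.prime_five⟩

-- Local, since a global instance makes instance search on `ZMod 5` go through its field structure.
attribute [local instance] fact_prime_five

variable {V : Type*} [AddCommGroup V]

/-- `A` is contained in a union of two parallel hyperplanes: the shape of the sets `A` with
`3A ≠ V` whose density is large. -/
def InTwoParallelHyperplanes (K : Type*) {V : Type*} [Field K] [AddCommGroup V] [Module K V]
    (A : Set V) : Prop :=
  ∃ φ : Dual K V, φ ≠ 0 ∧ ∃ i j, ∀ x ∈ A, φ x = i ∨ φ x = j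

theorem InTwoParallelHyperplanes.of_vadd {K : Type*} [Field K] [Module K V] {A : Set V} {g : V}
    (h : InTwoParallelHyperplanes K (g +ᵥ A)) : InTwoParallelHyperplanes K A := by
  obtain ⟨φ, hφ, i, j, hij⟩ := h
  refine ⟨φ, hφ, i - φ g, j - φ g, fun x hx ↦ ?_⟩
  simpa only [eq_sub_iff_add_eq', vadd_eq_add, map_add] using hij _ (Set.vadd_mem_vadd_set hx)

variable [Finite V] [Module (ZMod 5) V] {A : Finset V} {φ : Dual (ZMod 5) V}

theorem dualSlice_eq_empty_of_lt_card_dualSlice_one [DecidableEq V] (hA : 0 ∉ A + A + A)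
    (hcard : 3 * Nat.card φ.ker < 2 * #A) (h1 : Nat.card φ.ker < 2 * #(dualSlice A φ 1)) :
    dualSlice A φ 2 = ∅ ∧ dualSlice A φ 3 = ∅ ∧ (dualSlice A φ 0 = ∅ ∨ dualSlice A φ 4 = ∅) := by
  have hsum : #(dualSlice A φ 0) + #(dualSlice A φ 1) + #(dualSlice A φ 2) + #(dualSlice A φ 3) +
      #(dualSlice A φ 4) = #A :=
    (Fin.sum_univ_five _).symm.trans (sum_card_dualSlice A φ)
  have h1_ne : (dualSlice A φ 1).Nonempty := card_pos.mp (by omega)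
  have h3 : dualSlice A φ 3 = ∅ := dualSlice_eq_empty_of_lt_card_dualSlice hA (i := 1) rfl h1
  have h014 : dualSlice A φ 0 = ∅ ∨ dualSlice A φ 4 = ∅ ∨ 5 * (#(dualSlice A φ 0) +
      #(dualSlice A φ 1) + #(dualSlice A φ 4)) ≤ 6 * Nat.card φ.ker := by
    simp only [or_iff_not_imp_left, ← nonempty_iff_ne_empty]
    exact fun h0 h4 ↦ mul_card_dualSlice_add_add_le hA rfl h0 h1_ne h4
  have h2 : dualSlice A φ 2 = ∅ := by
    by_contra! h2_ne
    have := h2_ne.card_pos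
    have := mul_natCard_ker_add_mul_card_dualSlice_le hA (i := 2) (j := 2) (k := 1) (m := 3) rfl
      (by norm_num) h2_ne h2_ne
    have := mul_natCard_ker_add_mul_card_dualSlice_le hA (i := 1) (j := 2) (k := 2) rfl le_rfl
      h1_ne h2_ne
    have h4 : 2 * #(dualSlice A φ 4) ≤ Nat.card φ.ker := by
      by_contra! h4
      exact h2_ne.ne_empty (dualSlice_eq_empty_of_lt_card_dualSlice hA rfl h4)
    have h0 : 5 * #(dualSlice A φ 0) ≤ 2 * Nat.card φ.ker := by
      by_contra! h0
      have h0_ne : (dualSlice A φ 0).Nonempty := card_pos.mp (by omega)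
      have := mul_natCard_ker_add_mul_card_dualSlice_le hA (i := 0) (j := 0) (k := 0) (m := 4) rfl
        (by norm_num) h0_ne h0_ne (by omega)
      omega
    simp only [← card_eq_zero] at h014 h3
    omega
  refine ⟨h2, h3, ?_⟩
  simp only [← card_eq_zero] at h014 h2 h3 ⊢
  omega

theorem inTwoParallelHyperplanes_of_lt_card_dualSlice [DecidableEq V] (hA : 0 ∉ A + A + A)
    (hcard : 3 * Nat.card V < 10 * #A) (hφ : φ ≠ 0) {i : ZMod 5}
    (hi : Nat.card φ.ker < 2 * #(dualSlice A φ i)) :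
    InTwoParallelHyperplanes (ZMod 5) (A : Set V) := by
  obtain rfl | hi0 := eq_or_ne i 0
  · rw [dualSlice_eq_empty_of_lt_card_dualSlice hA rfl hi, card_empty] at hi
    omega
  have hψ : i⁻¹ • φ ≠ 0 := smul_ne_zero (inv_ne_zero hi0) hφ
  have hkerφ := mul_natCard_ker hφ
  have hkerψ := mul_natCard_ker hψ
  rw [← dualSlice_inv_smul_one hi0] at hi
  obtain ⟨h2, h3, h04⟩ :=
    dualSlice_eq_empty_of_lt_card_dualSlice_one hA (φ := i⁻¹ • φ) (by omega) (by omega)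
  generalize i⁻¹ • φ = ψ at *
  have of_empty {j : ZMod 5} (h : dualSlice A ψ j = ∅) (x : V) (hx : x ∈ A) : ψ x ≠ j :=
    fun hj ↦ notMem_empty x (h ▸ mem_dualSlice.mpr ⟨hx, hj⟩)
  have hcases : ∀ j : ZMod 5, j ≠ 2 → j ≠ 3 →
      (j ≠ 4 → j = 0 ∨ j = 1) ∧ (j ≠ 0 → j = 1 ∨ j = 4) := by
    decide
  obtain h0 | h4 := h04
  · exact ⟨ψ, hψ, 1, 4, fun x hx ↦
      (hcases _ (of_empty h2 x hx) (of_empty h3 x hx)).2 (of_empty h0 x hx)⟩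
  · exact ⟨ψ, hψ, 0, 1, fun x hx ↦
      (hcases _ (of_empty h2 x hx) (of_empty h3 x hx)).1 (of_empty h4 x hx)⟩

theorem sliceProfile_card_dualSlice_div [DecidableEq V] (hA : 0 ∉ A + A + A)
    (hcard : 3 * Nat.card V < 10 * #A) (hφ : φ ≠ 0)
    (hhalf : ∀ i, 2 * #(dualSlice A φ i) ≤ Nat.card φ.ker) :
    SliceProfile fun i ↦ (#(dualSlice A φ i) : ℝ) / Nat.card φ.ker := by
  have hker := mul_natCard_ker hφ
  have hpos : (0 : ℝ) < Nat.card φ.ker := Nat.cast_pos.mpr Nat.card_pos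
  have htriple (i j k : ZMod 5) (hijk : i + j + k = 0) :
      5 * (#(dualSlice A φ i) + #(dualSlice A φ j) + #(dualSlice A φ k)) ≤
        6 * Nat.card φ.ker := by
    obtain hi | hi := (dualSlice A φ i).eq_empty_or_nonempty
    · have := hhalf j
      have := hhalf k
      rw [hi, card_empty]
      omega
    obtain hj | hj := (dualSlice A φ j).eq_empty_or_nonempty
    · have := hhalf i
      have := hhalf k
      rw [hj, card_empty]
      omega
    obtain hk | hk := (dualSlice A φ k).eq_empty_or_nonempty
    · have := hhalf i
      have := hhalf j
      rw [hk, card_empty]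
      omega
    exact mul_card_dualSlice_add_add_le hA hijk hi hj hk
  refine ⟨fun i ↦ by positivity, fun i ↦ ?_, fun i j k hijk ↦ ?_, ?_⟩
  · rw [div_le_div_iff₀ hpos two_pos]
    exact_mod_cast (by linarith [hhalf i])
  · rw [← add_div, ← add_div, div_le_div_iff₀ hpos (by norm_num)]
    exact_mod_cast (by linarith [htriple i j k hijk])
  · rw [← sum_div, div_le_div_iff₀ two_pos hpos]
    exact_mod_cast (by rw [sum_card_dualSlice]; omega)

theorem neg_mul_norm_dualSum_sq_le_re_pow_three [DecidableEq V] (hA : 0 ∉ A + A + A)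
    (hcard : 3 * Nat.card V < 10 * #A) (hφ : φ ≠ 0)
    (hhalf : ∀ i, 2 * #(dualSlice A φ i) ≤ Nat.card φ.ker) :
    -(3 / 25 * Nat.card V : ℝ) * ‖dualSum ZMod.stdAddChar A φ‖ ^ 2 ≤
      (dualSum ZMod.stdAddChar A φ ^ 3).re := by
  have hker : (5 * Nat.card φ.ker : ℝ) = Nat.card V := mod_cast mul_natCard_ker hφ
  have hpos : (0 : ℝ) < Nat.card φ.ker := Nat.cast_pos.mpr Nat.card_pos
  have hprofile :=
    (sliceProfile_card_dualSlice_div hA hcard hφ hhalf).neg_mul_norm_sq_le_re_pow_three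
  set M : ℝ := (Nat.card φ.ker : ℝ)
  set z := ∑ i, (((#(dualSlice A φ i) : ℝ) / M : ℝ) : ℂ) * ZMod.stdAddChar i with hz
  have hsum : dualSum ZMod.stdAddChar A φ = M * z := by
    rw [dualSum_eq_sum_dualSlice, hz, mul_sum]
    refine sum_congr rfl fun i _ ↦ ?_
    rw [← mul_assoc, ← Complex.ofReal_mul, mul_div_cancel₀ _ hpos.ne', Complex.ofReal_natCast]
  rw [hsum, mul_pow, norm_mul, Complex.norm_of_nonneg hpos.le, ← Complex.ofReal_pow,
    Complex.re_ofReal_mul, ← hker]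
  calc _ = M ^ 3 * (-(3 / 5) * ‖z‖ ^ 2) := by ring
    _ ≤ _ := by gcongr

theorem inTwoParallelHyperplanes_of_zero_notMem [DecidableEq V] (hA : 0 ∉ A + A + A)
    (hcard : 3 * Nat.card V < 10 * #A) : InTwoParallelHyperplanes (ZMod 5) (A : Set V) := by
  by_contra hhyp
  have hhalf (φ : Dual (ZMod 5) V) (hφ : φ ≠ 0) (i) : 2 * #(dualSlice A φ i) ≤ Nat.card φ.ker := by
    by_contra! hi
    exact hhyp (inTwoParallelHyperplanes_of_lt_card_dualSlice hA hcard hφ hi)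
  have he : (ZMod.stdAddChar : AddChar (ZMod 5) ℂ) ≠ 1 := by
    simpa using ZMod.isPrimitive_stdAddChar 5 one_ne_zero
  have hsq := card_sq_le_of_re_dualSum_pow_three he (card_pos.mp (by omega)) hA
    fun φ hφ ↦ neg_mul_norm_dualSum_sq_le_re_pow_three hA hcard hφ (hhalf φ hφ)
  have hcard : 3 * (Nat.card V : ℝ) < 10 * #A := mod_cast hcard
  nlinarith

end Density

section IteratedSums

variable {G : Type*} [AddCommGroup G]

theorem itSum_three (A : Set G) : itSum 3 A = A + A + A := by
  simp only [itSum, Set.singleton_zero, zero_add]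

theorem itSum_mono (k : ℕ) {A B : Set G} (h : A ⊆ B) : itSum k A ⊆ itSum k B := by
  induction k with
  | zero => exact subset_rfl
  | succ k ih => exact Set.add_subset_add ih h

theorem itSum_vadd (k : ℕ) (g : G) (A : Set G) : itSum k (g +ᵥ A) = k • g +ᵥ itSum k A := by
  induction k with
  | zero => simp [itSum]
  | succ k ih => rw [itSum, itSum, ih, succ_nsmul, vadd_add_vadd_comm]

/-- The sets over whose sizes `Nk G k` is the supremum. -/
structure IsMaximalAperiodic (k : ℕ) (A : Set G) : Prop where
  aperiodic : {g : G | g +ᵥ A = A} = {0}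
  itSum_ne_univ : itSum k A ≠ Set.univ
  itSum_union_eq_univ : ∀ g ∉ A, itSum k (A ∪ {g}) = Set.univ

theorem IsMaximalAperiodic.Nk_eq {k : ℕ} {A : Set G} (hA : IsMaximalAperiodic k A)
    (h : ∀ B : Set G, IsMaximalAperiodic k B → B.ncard ≤ A.ncard) : Nk G k = A.ncard := by
  refine IsGreatest.csSup_eq ⟨⟨A, hA.aperiodic, hA.itSum_ne_univ, hA.itSum_union_eq_univ, rfl⟩, ?_⟩
  rintro _ ⟨B, hB₁, hB₂, hB₃, rfl⟩
  exact h B ⟨hB₁, hB₂, hB₃⟩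

theorem IsMaximalAperiodic.eq_of_subset {k : ℕ} {A B : Set G} (hA : IsMaximalAperiodic k A)
    (hAB : A ⊆ B) (hB : itSum k B ≠ Set.univ) : A = B := by
  refine hAB.antisymm fun g hg ↦ ?_
  by_contra hgA
  refine hB (Set.eq_univ_of_univ_subset ?_)
  rw [← hA.itSum_union_eq_univ g hgA]
  exact itSum_mono k (Set.union_subset hAB (Set.singleton_subset_iff.mpr hg))

theorem setOf_vadd_eq_self_eq_zero {p : ℕ} [Fact p.Prime] [Module (ZMod p) G] {A : Set G}
    (hA : ¬ p ∣ A.ncard) : {g : G | g +ᵥ A = A} = {0} := by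
  refine Set.eq_singleton_iff_unique_mem.mpr ⟨zero_vadd _ _, fun g hg ↦ ?_⟩
  by_contra hg0
  let g' : AddAction.stabilizer G A := ⟨g, hg⟩
  have horder : addOrderOf g' = p :=
    addOrderOf_eq_prime (Subtype.ext (ZModModule.char_nsmul_eq_zero p g))
      fun h ↦ hg0 (congrArg Subtype.val h)
  exact hA (horder ▸ (addOrderOf_dvd_natCard g').trans (card_stabilizer_dvd_ncard A))

end IteratedSums

section UpperBound

open Module

attribute [local instance] fact_prime_five

variable {V : Type*} [AddCommGroup V] [Module (ZMod 5) V]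

theorem itSum_three_preimage_ne_univ {φ : Dual (ZMod 5) V} (hφ : φ ≠ 0) (i j : ZMod 5) :
    itSum 3 (φ ⁻¹' {i, j}) ≠ Set.univ := by
  have exists_missing : ∀ i j : ZMod 5, ∃ s, ∀ a b c, (a = i ∨ a = j) → (b = i ∨ b = j) →
      (c = i ∨ c = j) → a + b + c ≠ s := by decide
  obtain ⟨s, hs⟩ := exists_missing i j
  obtain ⟨v, hv⟩ := LinearMap.surjective hφ s
  rw [itSum_three]
  refine (Set.ne_univ_iff_exists_notMem _).mpr ⟨v, ?_⟩
  rintro ⟨_, ⟨x, hx, y, hy, rfl⟩, z, hz, rfl⟩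
  exact hs _ _ _ hx hy hz (by rw [← hv, map_add, map_add])

theorem IsMaximalAperiodic.not_inTwoParallelHyperplanes {A : Set V} (hA : IsMaximalAperiodic 3 A)
    (hV : 2 ≤ finrank (ZMod 5) V) : ¬ InTwoParallelHyperplanes (ZMod 5) A := by
  rintro ⟨φ, hφ, i, j, hij⟩
  have hA_eq : A = φ ⁻¹' {i, j} := hA.eq_of_subset hij (itSum_three_preimage_ne_univ hφ i j)
  have : FiniteDimensional (ZMod 5) V := FiniteDimensional.of_finrank_pos (by omega)
  obtain ⟨v, hv, hv0⟩ := φ.ker.ne_bot_iff.mp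
    (LinearMap.ker_ne_bot_of_finrank_lt (by rw [finrank_self]; omega))
  have hperiod : v +ᵥ A = A := by
    ext x
    rw [hA_eq, Set.mem_vadd_set_iff_neg_vadd_mem, vadd_eq_add, Set.mem_preimage, map_add, map_neg,
      LinearMap.mem_ker.mp hv, neg_zero, zero_add, Set.mem_preimage]
  exact hv0 (hA.aperiodic.subset hperiod)

variable [Finite V] {A : Set V}

theorem inTwoParallelHyperplanes_of_itSum_three_ne_univ (hA : itSum 3 A ≠ Set.univ)
    (hcard : 3 * Nat.card V < 10 * A.ncard) : InTwoParallelHyperplanes (ZMod 5) A := by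
  classical
  obtain ⟨g, hg⟩ := (Set.ne_univ_iff_exists_notMem _).mp hA
  lift A to Finset V using A.toFinite
  refine InTwoParallelHyperplanes.of_vadd (g := -(2 • g)) ?_
  rw [← Finset.coe_vadd_finset]
  refine inTwoParallelHyperplanes_of_zero_notMem ?_ ?_
  · have h5 : 5 • g = 0 := ZModModule.char_nsmul_eq_zero 5 g
    have h3 : -((3 : ℕ) • -((2 : ℕ) • g)) = g :=
      calc -((3 : ℕ) • -((2 : ℕ) • g))
        _ = 5 • g + g := by abel
        _ = g := by rw [h5, zero_add]
    rw [← Finset.mem_coe, Finset.coe_add, Finset.coe_add, Finset.coe_vadd_finset, ← itSum_three,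
      itSum_vadd, Set.mem_vadd_set_iff_neg_vadd_mem, vadd_eq_add, add_zero, h3]
    exact hg
  · rwa [Finset.card_vadd_finset, ← Set.ncard_coe_finset]

theorem IsMaximalAperiodic.ten_mul_ncard_le (hA : IsMaximalAperiodic 3 A)
    (hV : 2 ≤ finrank (ZMod 5) V) : 10 * A.ncard ≤ 3 * Nat.card V := by
  by_contra! hcard
  exact hA.not_inTwoParallelHyperplanes hV
    (inTwoParallelHyperplanes_of_itSum_three_ne_univ hA.itSum_ne_univ hcard)

theorem InTwoParallelHyperplanes.five_mul_ncard_le (hA : InTwoParallelHyperplanes (ZMod 5) A) :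
    5 * A.ncard ≤ 2 * Nat.card V := by
  classical
  obtain ⟨φ, hφ, i, j, hij⟩ := hA
  lift A to Finset V using A.toFinite
  have hcover : A ⊆ dualSlice A φ i ∪ dualSlice A φ j := fun x hx ↦
    Finset.mem_union.mpr ((hij x hx).imp (mem_dualSlice.mpr ⟨hx, ·⟩) (mem_dualSlice.mpr ⟨hx, ·⟩))
  have hle := (Finset.card_le_card hcover).trans (Finset.card_union_le _ _)
  have hi := card_le_natCard_ker fun x hx ↦ (mem_dualSlice (A := A) (φ := φ) (i := i) |>.mp hx).2
  have hj := card_le_natCard_ker fun x hx ↦ (mem_dualSlice (A := A) (φ := φ) (i := j) |>.mp hx).2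
  rw [Set.ncard_coe_finset, ← mul_natCard_ker hφ]
  omega

theorem five_mul_ncard_le_of_itSum_three_ne_univ (hA : itSum 3 A ≠ Set.univ) :
    5 * A.ncard ≤ 2 * Nat.card V := by
  by_cases hcard : 3 * Nat.card V < 10 * A.ncard
  · exact (inTwoParallelHyperplanes_of_itSum_three_ne_univ hA hcard).five_mul_ncard_le
  · omega

end UpperBound

section ExtremalSet

open Module

attribute [local instance] fact_prime_five

theorem exists_disjoint_neg_union_neg_eq_diff_zero {G : Type*} [AddCommGroup G]
    (hG : ∀ x : G, -x = x → x = 0) (H : AddSubgroup G) :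
    ∃ B : Set G, Disjoint B (-B) ∧ B ∪ -B = (H : Set G) \ {0} := by
  classical
  let := linearOrderOfSTO (WellOrderingRel (α := G))
  refine ⟨{x | x ∈ H ∧ x < -x}, Set.disjoint_left.mpr fun x hx hx' ↦ ?_, Set.ext fun x ↦ ?_⟩
  · rw [Set.mem_neg, Set.mem_ofPred_eq, neg_neg] at hx'
    exact hx.2.asymm hx'.2
  · rw [Set.mem_union, Set.mem_neg, Set.mem_ofPred_eq, Set.mem_ofPred_eq, neg_mem_iff, neg_neg,
      ← and_or_left, ← ne_iff_lt_or_gt, ne_comm]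
    exact and_congr_right' (not_congr ⟨hG x, fun h ↦ by rw [Set.mem_singleton_iff.mp h, neg_zero]⟩)

variable {V : Type*} [AddCommGroup V]

/-- The construction behind the lower bound, used when `B ∪ -B` is a hyperplane without `0`, the
union being disjoint, and `t` lies outside that hyperplane; `4 • t` is then not a sum of three
elements. -/
def extremalSet (t : V) (B : Set V) : Set V :=
  {2 • t} ∪ (B ∪ -B) ∪ (t +ᵥ B)

variable [Module (ZMod 5) V] {φ : Dual (ZMod 5) V} {t : V} {B : Set V}

theorem apply_eq_of_mem_extremalSet (ht : φ t = 1) (hB : B ∪ -B = (φ.ker : Set V) \ {0}) {x : V}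
    (hx : x ∈ extremalSet t B) :
    φ x = 2 ∧ x = 2 • t ∨ φ x = 0 ∧ x ≠ 0 ∨ φ x = 1 ∧ ∃ b ∈ B, x = t + b := by
  obtain (rfl | hx) | ⟨b, hb, rfl⟩ := hx
  · exact .inl ⟨by rw [map_nsmul, ht]; rfl, rfl⟩
  · rw [hB] at hx
    exact .inr (.inl hx)
  · have hb0 : φ b = 0 := (hB.subset (.inl hb)).1
    exact .inr (.inr ⟨(map_add φ t b).trans (by rw [ht, hb0, add_zero]), b, hb, rfl⟩)

theorem add_ne_two_nsmul_of_mem_extremalSet (ht : φ t = 1) (hdisj : Disjoint B (-B))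
    (hB : B ∪ -B = (φ.ker : Set V) \ {0}) {x y : V} (hx : x ∈ extremalSet t B)
    (hy : y ∈ extremalSet t B) : x + y ≠ 2 • t := by
  intro hxy
  have hφ : φ x + φ y = 2 := by rw [← map_add, hxy, map_nsmul, ht]; rfl
  obtain ⟨hφx, rfl⟩ | ⟨hφx, hx0⟩ | ⟨hφx, b, hb, rfl⟩ := apply_eq_of_mem_extremalSet ht hB hx <;>
  obtain ⟨hφy, rfl⟩ | ⟨hφy, hy0⟩ | ⟨hφy, c, hc, rfl⟩ := apply_eq_of_mem_extremalSet ht hB hy <;>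
  simp only [hφx, hφy] at hφ <;> try exact absurd hφ (by decide)
  · exact hy0 (add_eq_left.mp hxy)
  · exact hx0 (add_eq_right.mp hxy)
  · have hbc : b + c = 0 := by
      rw [two_nsmul, add_add_add_comm] at hxy
      exact add_eq_left.mp hxy
    exact Set.disjoint_left.mp hdisj hb (Set.mem_neg.mpr (neg_eq_of_add_eq_zero_right hbc ▸ hc))

theorem four_nsmul_notMem_itSum_three_extremalSet (ht : φ t = 1) (hdisj : Disjoint B (-B))
    (hB : B ∪ -B = (φ.ker : Set V) \ {0}) : 4 • t ∉ itSum 3 (extremalSet t B) := by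
  rw [itSum_three]
  rintro ⟨_, ⟨x, hx, y, hy, rfl⟩, z, hz, hxyz : x + y + z = 4 • t⟩
  have hφ : φ x + φ y + φ z = 4 := by rw [← map_add, ← map_add, hxyz, map_nsmul, ht]; rfl
  have add_ne {u v : V} (hu : u ∈ extremalSet t B) (hv : v ∈ extremalSet t B) : u + v ≠ 2 • t :=
    add_ne_two_nsmul_of_mem_extremalSet ht hdisj hB hu hv
  have eq_two_nsmul : x = 2 • t ∨ y = 2 • t ∨ z = 2 • t := by
    have exists_two : ∀ a b c : ZMod 5, (a = 2 ∨ a = 0 ∨ a = 1) → (b = 2 ∨ b = 0 ∨ b = 1) →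
        (c = 2 ∨ c = 0 ∨ c = 1) → a + b + c = 4 → a = 2 ∨ b = 2 ∨ c = 2 := by decide
    have apply_eq {u : V} (hu : u ∈ extremalSet t B) : φ u = 2 ∨ φ u = 0 ∨ φ u = 1 :=
      (apply_eq_of_mem_extremalSet ht hB hu).imp And.left (Or.imp And.left And.left)
    have eq_of_two {u : V} (hu : u ∈ extremalSet t B) (h2 : φ u = 2) : u = 2 • t := by
      obtain ⟨-, h⟩ | ⟨h, -⟩ | ⟨h, -⟩ := apply_eq_of_mem_extremalSet ht hB hu
      · exact h
      all_goals exact absurd (h.symm.trans h2) (by decide)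
    exact (exists_two _ _ _ (apply_eq hx) (apply_eq hy) (apply_eq hz) hφ).imp (eq_of_two hx)
      (Or.imp (eq_of_two hy) (eq_of_two hz))
  obtain h | h | h := eq_two_nsmul
  · exact add_ne hy hz (by linear_combination (norm := module) hxyz - h)
  · exact add_ne hx hz (by linear_combination (norm := module) hxyz - h)
  · exact add_ne hx hy (by linear_combination (norm := module) hxyz - h)

theorem not_inTwoParallelHyperplanes_extremalSet (ht : φ t = 1)
    (hB : B ∪ -B = (φ.ker : Set V) \ {0}) (hker : φ.ker ≠ ⊥) :
    ¬ InTwoParallelHyperplanes (ZMod 5) (extremalSet t B) := by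
  rintro ⟨ψ, hψ, i, j, hij⟩
  have pigeonhole : ∀ s i j : ZMod 5, s ≠ 0 →
      (¬ ((0 = i ∨ 0 = j) ∧ (s = i ∨ s = j) ∧ (2 * s = i ∨ 2 * s = j))) ∧
      (¬ ((s = i ∨ s = j) ∧ (2 * s = i ∨ 2 * s = j) ∧ (3 * s = i ∨ 3 * s = j))) := by decide
  have mem_of_ker {v : V} (hv : v ∈ φ.ker) (hv0 : v ≠ 0) : v ∈ extremalSet t B :=
    .inl (.inr (hB ▸ ⟨hv, hv0⟩))
  by_cases hψker : φ.ker ≤ ψ.ker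
  · obtain ⟨v, hv, hv0⟩ := φ.ker.ne_bot_iff.mp hker
    obtain ⟨b, hb⟩ : B.Nonempty := by
      by_contra! hempty
      simpa [hempty] using hB.superset ⟨hv, hv0⟩
    have hψt : ψ t ≠ 0 := fun h ↦ hψ <| LinearMap.ext fun x ↦ by
      have := hψker (x := x - φ x • t) (by simp [ht])
      simpa [h] using this
    have hψb : ψ b = 0 := hψker (hB.subset (.inl hb)).1
    refine (pigeonhole (ψ t) i j hψt).1 ⟨?_, ?_, ?_⟩
    · simpa only [LinearMap.mem_ker.mp (hψker hv)] using hij v (mem_of_ker hv hv0)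
    · simpa only [vadd_eq_add, map_add, hψb, add_zero] using
        hij _ (.inr (Set.vadd_mem_vadd_set hb))
    · simpa only [map_nsmul, nsmul_eq_mul, Nat.cast_ofNat] using hij _ (.inl (.inl rfl))
  · obtain ⟨v, hv, hψv⟩ := SetLike.not_le_iff_exists.mp hψker
    have smul_mem {c : ZMod 5} (hc : c ≠ 0) : c • v ∈ extremalSet t B :=
      mem_of_ker (φ.ker.smul_mem c hv)
        (smul_ne_zero hc fun h ↦ hψv (h ▸ zero_mem ψ.ker))
    refine (pigeonhole (ψ v) i j hψv).2 ⟨?_, ?_, ?_⟩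
    · simpa using hij _ (smul_mem (c := 1) (by decide))
    · simpa using hij _ (smul_mem (c := 2) (by decide))
    · simpa using hij _ (smul_mem (c := 3) (by decide))

variable [Finite V]

theorem two_mul_ncard_extremalSet_add_one (ht : φ t = 1) (hdisj : Disjoint B (-B))
    (hB : B ∪ -B = (φ.ker : Set V) \ {0}) :
    2 * (extremalSet t B).ncard + 1 = 3 * Nat.card φ.ker := by
  have hker : ∀ x ∈ B ∪ -B, φ x = 0 := fun x hx ↦ (hB.subset hx).1
  have hvadd : ∀ x ∈ t +ᵥ B, φ x = 1 := by
    rintro _ ⟨b, hb, rfl⟩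
    exact (map_add φ t b).trans (by rw [ht, hker b (.inl hb), add_zero])
  have hdisj₁ : Disjoint {2 • t} (B ∪ -B) := by
    refine Set.disjoint_singleton_left.mpr fun h ↦ ?_
    have := hker _ h
    rw [map_nsmul, ht] at this
    exact absurd this (by decide)
  have hdisj₂ : Disjoint ({2 • t} ∪ (B ∪ -B)) (t +ᵥ B) := by
    refine Set.disjoint_left.mpr fun x hx hx' ↦ ?_
    have h1 := hvadd x hx'
    obtain rfl | hx := hx
    · rw [map_nsmul, ht] at h1
      exact absurd h1 (by decide)
    · exact absurd ((hker x hx).symm.trans h1) (by decide)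
  have hunion : (B ∪ -B).ncard = 2 * B.ncard := by
    rw [Set.ncard_union_eq hdisj, ← Set.image_neg_eq_neg,
      Set.ncard_image_of_injective _ neg_injective, two_mul]
  have hhalf : 2 * B.ncard + 1 = Nat.card φ.ker := by
    rw [← hunion, hB, Set.ncard_sdiff_singleton_add_one φ.ker.zero_mem]
    rfl
  rw [extremalSet, Set.ncard_union_eq hdisj₂, Set.ncard_union_eq hdisj₁, Set.ncard_singleton,
    hunion, Set.ncard_vadd_set]
  omega

theorem isMaximalAperiodic_extremalSet (ht : φ t = 1) (hdisj : Disjoint B (-B))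
    (hB : B ∪ -B = (φ.ker : Set V) \ {0}) (hker : φ.ker ≠ ⊥) :
    IsMaximalAperiodic 3 (extremalSet t B) := by
  have hcard := two_mul_ncard_extremalSet_add_one ht hdisj hB
  have hφ : φ ≠ 0 := by
    rintro rfl
    exact zero_ne_one ht
  have hcard_ker := mul_natCard_ker hφ
  refine ⟨setOf_vadd_eq_self_eq_zero (p := 5) ?_, ?_, fun g hg ↦ ?_⟩
  · have h5 : 5 ∣ Nat.card φ.ker := by
      have : Nontrivial φ.ker := Submodule.nontrivial_iff_ne_bot.mpr hker
      rw [natCard_eq_pow_finrank (K := ZMod 5), Nat.card_zmod]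
      exact dvd_pow_self 5 finrank_pos.ne'
    omega
  · exact (Set.ne_univ_iff_exists_notMem _).mpr
      ⟨4 • t, four_nsmul_notMem_itSum_three_extremalSet ht hdisj hB⟩
  · by_contra hne
    obtain ⟨ψ, hψ, i, j, hij⟩ := inTwoParallelHyperplanes_of_itSum_three_ne_univ hne (by
      rw [Set.union_singleton, Set.ncard_insert_of_notMem hg]
      omega)
    exact not_inTwoParallelHyperplanes_extremalSet ht hB hker
      ⟨ψ, hψ, i, j, fun x hx ↦ hij x (.inl hx)⟩

end ExtremalSet

section ElementaryFiveGroup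

open Module

attribute [local instance] fact_prime_five

variable {V : Type*} [AddCommGroup V] [Module (ZMod 5) V]

theorem four_nsmul_notMem_itSum_three_pair {t : V} (ht : t ≠ 0) : 4 • t ∉ itSum 3 {0, t} := by
  rw [itSum_three]
  rintro ⟨_, ⟨x, hx, y, hy, rfl⟩, z, hz, hxyz : x + y + z = 4 • t⟩
  have eq_smul {u : V} (hu : u ∈ ({0, t} : Set V)) : ∃ c : ZMod 5, (c = 0 ∨ c = 1) ∧ u = c • t := by
    obtain rfl | rfl := hu
    · exact ⟨0, .inl rfl, (zero_smul _ _).symm⟩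
    · exact ⟨1, .inr rfl, (one_smul _ _).symm⟩
  obtain ⟨a, ha, rfl⟩ := eq_smul hx
  obtain ⟨b, hb, rfl⟩ := eq_smul hy
  obtain ⟨c, hc, rfl⟩ := eq_smul hz
  have add_ne_four : ∀ a b c : ZMod 5, (a = 0 ∨ a = 1) → (b = 0 ∨ b = 1) → (c = 0 ∨ c = 1) →
      a + b + c ≠ 4 := by decide
  refine add_ne_four a b c ha hb hc (smul_left_injective (ZMod 5) ht ?_)
  rw [← Nat.cast_smul_eq_nsmul (ZMod 5), ← add_smul, ← add_smul] at hxyz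
  exact hxyz

theorem isMaximalAperiodic_pair (hV : Nat.card V = 5) {t : V} (ht : t ≠ 0) :
    IsMaximalAperiodic 3 {0, t} := by
  have : Finite V := Nat.finite_of_card_ne_zero (by omega)
  have hcard : ({0, t} : Set V).ncard = 2 := Set.ncard_pair ht.symm
  refine ⟨setOf_vadd_eq_self_eq_zero (p := 5) (by rw [hcard]; decide), ?_, fun g hg ↦ ?_⟩
  · exact (Set.ne_univ_iff_exists_notMem _).mpr ⟨4 • t, four_nsmul_notMem_itSum_three_pair ht⟩
  · by_contra hne
    have := five_mul_ncard_le_of_itSum_three_ne_univ hne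
    rw [Set.union_singleton, Set.ncard_insert_of_notMem hg, hcard, hV] at this
    omega

theorem Nk_three_of_finrank_eq_one (hV : finrank (ZMod 5) V = 1) : Nk V 3 = 2 := by
  have : FiniteDimensional (ZMod 5) V := FiniteDimensional.of_finrank_pos (by omega)
  have : Finite V := Module.finite_of_finite (ZMod 5)
  have hcard : Nat.card V = 5 := by
    rw [natCard_eq_pow_finrank (K := ZMod 5), Nat.card_zmod, hV, pow_one]
  have : Nontrivial V := nontrivial_of_finrank_eq_succ hV
  obtain ⟨t, ht⟩ := exists_ne (0 : V)
  rw [(isMaximalAperiodic_pair hcard ht).Nk_eq fun B hB ↦ ?_, Set.ncard_pair ht.symm]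
  have := five_mul_ncard_le_of_itSum_three_ne_univ hB.itSum_ne_univ
  rw [Set.ncard_pair ht.symm]
  omega

theorem Nk_three_of_two_le_finrank (hV : 2 ≤ finrank (ZMod 5) V) :
    Nk V 3 = (3 * 5 ^ (finrank (ZMod 5) V - 1) - 1) / 2 := by
  have : FiniteDimensional (ZMod 5) V := FiniteDimensional.of_finrank_pos (by omega)
  have : Finite V := Module.finite_of_finite (ZMod 5)
  have : Nontrivial V := nontrivial_of_finrank_pos (R := ZMod 5) (by omega)
  obtain ⟨t, ht0⟩ := exists_ne (0 : V)
  obtain ⟨φ, ht⟩ : ∃ φ : Dual (ZMod 5) V, φ t = 1 :=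
    Projective.exists_dual_eq_one (ZMod 5) ht0
  have hφ : φ ≠ 0 := by
    rintro rfl
    exact zero_ne_one ht
  have hker : φ.ker ≠ ⊥ := LinearMap.ker_ne_bot_of_finrank_lt (by rw [finrank_self]; omega)
  have hcard_ker : Nat.card φ.ker = 5 ^ (finrank (ZMod 5) V - 1) := by
    refine Nat.eq_of_mul_eq_mul_left (show 0 < 5 by norm_num) ?_
    rw [mul_natCard_ker hφ, natCard_eq_pow_finrank (K := ZMod 5), Nat.card_zmod, mul_pow_sub_one]
    omega
  have eq_zero_of_neg_eq_self (x : V) (hx : -x = x) : x = 0 := by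
    have h2 : (2 : ZMod 5) • x = 0 := by rw [two_smul, ← neg_add_cancel x, hx]
    exact (smul_eq_zero.mp h2).resolve_left (by decide)
  obtain ⟨B, hdisj, hB⟩ := exists_disjoint_neg_union_neg_eq_diff_zero
    eq_zero_of_neg_eq_self φ.ker.toAddSubgroup
  have hcard := two_mul_ncard_extremalSet_add_one ht hdisj hB
  rw [(isMaximalAperiodic_extremalSet ht hdisj hB hker).Nk_eq fun C hC ↦ ?_, ← hcard_ker]
  · omega
  · have := hC.ten_mul_ncard_le hV
    have := mul_natCard_ker hφ
    omega

theorem stmt1_general :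
    (finrank (ZMod 5) V = 1 → Nk V 3 = 2) ∧
    (2 ≤ finrank (ZMod 5) V → Nk V 3 = (3 * 5 ^ (finrank (ZMod 5) V - 1) - 1) / 2) :=
  ⟨Nk_three_of_finrank_eq_one, Nk_three_of_two_le_finrank⟩

end ElementaryFiveGroup

/-- `N₃((ℤ/5ℤ)ⁿ) = 2` for `n = 1` and `N₃((ℤ/5ℤ)ⁿ) = (3·5^(n-1) − 1)/2` for `n ≥ 2`. -/
theorem stmt1 (n : ℕ) (hn : 1 ≤ n) :
    (n = 1 → Nk (Fin n → ZMod 5) 3 = 2) ∧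
    (2 ≤ n → Nk (Fin n → ZMod 5) 3 = (3 * 5 ^ (n - 1) - 1) / 2) := by
  have := fact_prime_five
  simpa only [Module.finrank_fin_fun] using stmt1_general (V := Fin n → ZMod 5)
end

section
/- Let n ≥ 1 be an integer and let A be a subset of G = (ℤ/5ℤ)^n with |A| > 0.3·5^n. If 3A ≠ G, then there is no subgroup F of G of index 5 such that A has non-empty intersection with exactly three cosets of F. -/
open Pointwise

/-!
Put `N = |F|`, so that `3N < 2|A|`, and let `A` meet exactly the cosets `x`, `y`, `z`. By
pigeonhole, if the parts of `A` in cosets `q` and `r` have more than `N` elements together, their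
sumset is the whole coset `q + r`; hence `q + r + s ⊆ 3A` for every coset `s` met by `A`. A
three-element subset of `ℤ/5ℤ` is an arithmetic progression, so `x`, `y`, `z` can be labelled such
that a given coset `t` is `x + y + z`, or `2y + z = x + 2z`, or `y + 2z = 3x`. In each case some
such sum contains two cosets whose parts of `A` are large enough, since otherwise adding the
failing inequalities gives `|A| ≤ 3N/2`.
-/

open Set

section ZModFive

theorem exists_eq_progression_of_card_eq_three (S : Finset (ZMod 5)) (hS : S.card = 3) :
    ∃ m d, d ≠ 0 ∧ S = {m - d, m, m + d} := by
  revert S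
  decide

theorem eq_zero_or_eq_or_two_mul_or_neg {d : ZMod 5} (hd : d ≠ 0) (u : ZMod 5) :
    u = 0 ∨ (u = d ∨ u = 2 * d) ∨ (u = -d ∨ u = 2 * -d) := by
  decide +revert

/-- `IsTripleSum x y z t` says that `t` is a sum of three elements of `{x, y, z}` in one of the
patterns for which the pigeonhole argument yields an element of the sumset. When `x, y, z` is an
arithmetic progression in `ℤ/5ℤ` with difference `d`, they are `t = 3y`, `t = 3y + d` and
`t = 3y + 2d`. -/
def IsTripleSum {Q : Type*} [Add Q] (x y z t : Q) : Prop :=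
  t = x + y + z ∨ (t = y + y + z ∧ t = x + z + z) ∨ (t = y + z + z ∧ t = x + x + x)

theorem IsTripleSum.map {Q R E : Type*} [Add Q] [Add R] [FunLike E Q R] [AddHomClass E Q R] (f : E)
    {x y z t : Q} (h : IsTripleSum x y z t) : IsTripleSum (f x) (f y) (f z) (f t) := by
  simp only [IsTripleSum, ← map_add]
  exact h.imp (congrArg f) (.imp (.imp (congrArg f) (congrArg f)) (.imp (congrArg f) (congrArg f)))

theorem isTripleSum_progression (m d : ZMod 5) {t : ZMod 5}
    (ht : t - 3 * m = d ∨ t - 3 * m = 2 * d) : IsTripleSum (m - d) m (m + d) t := by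
  have five_eq_zero : (5 : ZMod 5) = 0 := rfl
  rcases ht with ht | ht
  · exact .inr (.inl ⟨by linear_combination ht, by linear_combination ht⟩)
  · exact .inr (.inr ⟨by linear_combination ht, by linear_combination ht + d * five_eq_zero⟩)

theorem exists_isTripleSum_zmod_five (S : Finset (ZMod 5)) (hS : S.card = 3) (t : ZMod 5) :
    ∃ x y z, S = {x, y, z} ∧ IsTripleSum x y z t := by
  obtain ⟨m, d, hd, rfl⟩ := exists_eq_progression_of_card_eq_three S hS
  obtain ht | ht | ht := eq_zero_or_eq_or_two_mul_or_neg hd (t - 3 * m)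
  · exact ⟨m - d, m, m + d, rfl, .inl (by linear_combination ht)⟩
  · exact ⟨m - d, m, m + d, rfl, isTripleSum_progression m d ht⟩
  · refine ⟨m + d, m, m - d, by grind, ?_⟩
    simpa only [sub_neg_eq_add, ← sub_eq_add_neg] using isTripleSum_progression m (-d) ht

theorem exists_isTripleSum_of_ncard_eq_three {Q : Type*} [AddCommGroup Q] (hQ : Nat.card Q = 5)
    {S : Set Q} (hS : S.ncard = 3) (t : Q) :
    ∃ x y z, S = {x, y, z} ∧ IsTripleSum x y z t := by
  have : Fact (Nat.Prime 5) := ⟨Nat.prime_five⟩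
  let e : ZMod 5 ≃+ Q :=
    (ZMod.ringEquivCongr hQ.symm).toAddEquiv.trans
      (zmodAddCyclicAddEquiv (isAddCyclic_of_prime_card hQ))
  obtain ⟨T, hT⟩ := (toFinite (e ⁻¹' S)).exists_finset_coe
  have hT_card : T.card = 3 := by
    rw [← ncard_coe_finset, hT, ← hS, ← ncard_image_of_injective _ e.injective,
      image_preimage_eq S e.surjective]
  obtain ⟨x, y, z, hxyz, ht⟩ := exists_isTripleSum_zmod_five T hT_card (e.symm t)
  refine ⟨e x, e y, e z, ?_, by simpa only [e.apply_symm_apply] using ht.map e⟩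
  rw [← image_preimage_eq S e.surjective, ← hT, hxyz]
  simp [image_insert_eq]

end ZModFive

section CosetSlice

variable {G : Type*}

/-- The part of `A` lying in the coset `q` of `F`. -/
def cosetSlice [AddGroup G] (F : AddSubgroup G) (A : Set G) (q : G ⧸ F) : Set G :=
  {a ∈ A | (a : G ⧸ F) = q}

theorem ncard_preimage_quotientMk_singleton [AddGroup G] (F : AddSubgroup G) (q : G ⧸ F) :
    ((QuotientAddGroup.mk : G → G ⧸ F) ⁻¹' {q}).ncard = Nat.card F := by
  rw [← Nat.card_coe_set_eq,
    Nat.card_congr (QuotientAddGroup.preimageMkEquivAddSubgroupProdSet F {q}), Nat.card_prod,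
    Nat.card_coe_set_eq, ncard_singleton, mul_one]

theorem finite_preimage_quotientMk_singleton [AddGroup G] (F : AddSubgroup G) [Finite F]
    (q : G ⧸ F) : ((QuotientAddGroup.mk : G → G ⧸ F) ⁻¹' {q}).Finite :=
  finite_of_ncard_pos (ncard_preimage_quotientMk_singleton F q ▸ Nat.card_pos)

theorem finite_cosetSlice [AddGroup G] (F : AddSubgroup G) [Finite F] (A : Set G) (q : G ⧸ F) :
    (cosetSlice F A q).Finite :=
  (finite_preimage_quotientMk_singleton F q).subset fun _ ha ↦ ha.2

theorem mem_add_of_card_lt_ncard_cosetSlice [AddGroup G] {F : AddSubgroup G} [F.Normal] [Finite F]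
    {A B : Set G} {q r : G ⧸ F} {g : G} (hg : (g : G ⧸ F) = q + r)
    (h : Nat.card F < (cosetSlice F A q).ncard + (cosetSlice F B r).ncard) : g ∈ A + B := by
  have hinj : Function.Injective fun b : G ↦ g - b := sub_right_injective
  by_contra hgAB
  have hdisj : Disjoint (cosetSlice F A q) ((g - ·) '' cosetSlice F B r) := by
    rw [disjoint_left]
    rintro _ ⟨ha, -⟩ ⟨b, ⟨hb, -⟩, rfl⟩
    exact hgAB ⟨g - b, ha, b, hb, sub_add_cancel g b⟩
  have hsub : cosetSlice F A q ∪ (g - ·) '' cosetSlice F B r ⊆ QuotientAddGroup.mk ⁻¹' {q} := by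
    rintro _ (⟨-, ha⟩ | ⟨b, ⟨-, hb⟩, rfl⟩)
    · exact ha
    · simp [hg, hb]
  have hle := ncard_le_ncard hsub (finite_preimage_quotientMk_singleton F q)
  rw [ncard_union_eq hdisj (finite_cosetSlice F A q) ((finite_cosetSlice F B r).image _),
    ncard_image_of_injective _ hinj, ncard_preimage_quotientMk_singleton] at hle
  exact h.not_ge hle

variable [AddCommGroup G] {F : AddSubgroup G} [Finite F] {A : Set G}

theorem mem_itSum_three_of_card_lt_ncard_cosetSlice {q r s : G ⧸ F} {g : G}
    (hg : (g : G ⧸ F) = q + r + s)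
    (h : Nat.card F < (cosetSlice F A q).ncard + (cosetSlice F A r).ncard)
    (hs : s ∈ (QuotientAddGroup.mk '' A : Set (G ⧸ F))) : g ∈ itSum 3 A := by
  obtain ⟨c, hc, rfl⟩ := hs
  have hgc : ((g - c : G) : G ⧸ F) = q + r := by
    rw [QuotientAddGroup.mk_sub, hg, add_sub_cancel_right]
  simpa only [itSum, singleton_zero, zero_add, sub_add_cancel] using
    add_mem_add (mem_add_of_card_lt_ncard_cosetSlice hgc h) hc

theorem ncard_le_sum_ncard_cosetSlice {x y z : G ⧸ F}
    (hA : (QuotientAddGroup.mk '' A : Set (G ⧸ F)) = {x, y, z}) :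
    A.ncard ≤ (cosetSlice F A x).ncard + (cosetSlice F A y).ncard + (cosetSlice F A z).ncard := by
  have hsub : A ⊆ cosetSlice F A x ∪ cosetSlice F A y ∪ cosetSlice F A z := fun a ha ↦ by
    have : (a : G ⧸ F) ∈ ({x, y, z} : Set (G ⧸ F)) := hA ▸ mem_image_of_mem _ ha
    simp_all [cosetSlice, or_assoc]
  calc A.ncard
      ≤ (cosetSlice F A x ∪ cosetSlice F A y ∪ cosetSlice F A z).ncard :=
        ncard_le_ncard hsub (((finite_cosetSlice F A x).union (finite_cosetSlice F A y)).union
          (finite_cosetSlice F A z))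
    _ ≤ (cosetSlice F A x ∪ cosetSlice F A y).ncard + (cosetSlice F A z).ncard :=
        ncard_union_le _ _
    _ ≤ _ := by gcongr; exact ncard_union_le _ _

theorem mem_itSum_three_of_isTripleSum {x y z : G ⧸ F} {g : G}
    (hA : (QuotientAddGroup.mk '' A : Set (G ⧸ F)) = {x, y, z})
    (hcard : 3 * Nat.card F < 2 * A.ncard) (hg : IsTripleSum x y z (g : G ⧸ F)) :
    g ∈ itSum 3 A := by
  have hsum := ncard_le_sum_ncard_cosetSlice hA
  have hx : x ∈ (QuotientAddGroup.mk '' A : Set (G ⧸ F)) := by simp [hA]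
  have hy : y ∈ (QuotientAddGroup.mk '' A : Set (G ⧸ F)) := by simp [hA]
  have hz : z ∈ (QuotientAddGroup.mk '' A : Set (G ⧸ F)) := by simp [hA]
  rcases hg with hxyz | ⟨hyyz, hxzz⟩ | ⟨hyzz, hxxx⟩
  · have hlarge : Nat.card F < (cosetSlice F A x).ncard + (cosetSlice F A y).ncard ∨
        Nat.card F < (cosetSlice F A x).ncard + (cosetSlice F A z).ncard ∨
        Nat.card F < (cosetSlice F A y).ncard + (cosetSlice F A z).ncard := by omega
    obtain h | h | h := hlarge
    · exact mem_itSum_three_of_card_lt_ncard_cosetSlice hxyz h hz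
    · exact mem_itSum_three_of_card_lt_ncard_cosetSlice (hxyz.trans (by abel)) h hy
    · exact mem_itSum_three_of_card_lt_ncard_cosetSlice (hxyz.trans (by abel)) h hx
  · have hlarge : Nat.card F < (cosetSlice F A y).ncard + (cosetSlice F A y).ncard ∨
        Nat.card F < (cosetSlice F A x).ncard + (cosetSlice F A z).ncard := by omega
    obtain h | h := hlarge
    · exact mem_itSum_three_of_card_lt_ncard_cosetSlice hyyz h hz
    · exact mem_itSum_three_of_card_lt_ncard_cosetSlice hxzz h hz
  · have hlarge : Nat.card F < (cosetSlice F A y).ncard + (cosetSlice F A z).ncard ∨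
        Nat.card F < (cosetSlice F A x).ncard + (cosetSlice F A x).ncard := by omega
    obtain h | h := hlarge
    · exact mem_itSum_three_of_card_lt_ncard_cosetSlice hyzz h hz
    · exact mem_itSum_three_of_card_lt_ncard_cosetSlice hxxx h hx

end CosetSlice

theorem stmt2_general {G : Type*} [AddCommGroup G] [Finite G] (A : Set G)
    (hA : (A.ncard : ℝ) > 0.3 * Nat.card G) (h3A : itSum 3 A ≠ Set.univ) :
    ¬ ∃ F : AddSubgroup G,
        F.index = 5 ∧ (QuotientAddGroup.mk '' A : Set (G ⧸ F)).ncard = 3 := by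
  rintro ⟨F, hF, hthree⟩
  have hcard : 3 * Nat.card F < 2 * A.ncard := by
    have hG : (Nat.card F : ℝ) * 5 = Nat.card G := by exact_mod_cast hF ▸ F.card_mul_index
    have : (3 * Nat.card F : ℝ) < 2 * A.ncard := by linarith
    exact_mod_cast this
  refine h3A (eq_univ_of_forall fun g ↦ ?_)
  obtain ⟨x, y, z, hxyz, hg⟩ := exists_isTripleSum_of_ncard_eq_three hF hthree (g : G ⧸ F)
  exact mem_itSum_three_of_isTripleSum hxyz hcard hg

/-- If `A ⊆ (ℤ/5ℤ)ⁿ` has `|A| > 0.3·5ⁿ` and `3A ≠ G`, then `A` cannot meet exactly three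
cosets of an index-5 subgroup. -/
theorem stmt2 (n : ℕ) (hn : 1 ≤ n) (A : Set (Fin n → ZMod 5))
    (hA : (A.ncard : ℝ) > 0.3 * 5 ^ n)
    (h3A : itSum 3 A ≠ Set.univ) :
    ¬ ∃ F : AddSubgroup (Fin n → ZMod 5),
        F.index = 5 ∧
        (QuotientAddGroup.mk '' A : Set ((Fin n → ZMod 5) ⧸ F)).ncard = 3 := by
  exact stmt2_general A (by simpa using hA) h3A
end

section
/- Let n ≥ 1 be an integer and let A be a subset of G = (ℤ/5ℤ)^n. If the 2-fold sumset 2A satisfies |2A| < 0.5·5^n, then |A| < 0.25·5^n. -/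
open Pointwise

/-!
Kneser's theorem is proved by Kemperman's method: with the Dyson `e`-transform, every `c ∈ A + B` is
seen to lie in a subset `C` of `A + B` with `|A| + |B| ≤ |C| + |Stab C|`, and a lower bound on
`|C| + |Stab C|` is inherited by unions, so it holds for `A + B`.

Let `H` be the stabilizer of `A + A`. Kneser's theorem reads `2 |A + H| ≤ |A + A| + |H|`. Write
`|A + H| = a |H|` and `|G| = q |H|`. If `|A + A| < |G| / 2` then `4 a < q + 2`, and when `q` is
`1` or `2` modulo `4` this forces `4 a < q`, hence `|A| ≤ |A + H| < |G| / 4`.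
-/

open scoped Finset

theorem add_le_add_of_mul_le_mul {k p q a : ℕ} (hk : 0 < k) (hp : k ≤ p) (hq : k ≤ q)
    (h : p * q ≤ k * a) : p + q ≤ a + k := by
  obtain ⟨p', rfl⟩ := Nat.exists_eq_add_of_le hp
  obtain ⟨q', rfl⟩ := Nat.exists_eq_add_of_le hq
  refine le_of_mul_le_mul_left ?_ hk
  -- `(p - k) * (q - k) ≥ 0`
  nlinarith [Nat.zero_le (p' * q')]

section Kneser

variable {G : Type*} [AddCommGroup G] [DecidableEq G]

theorem card_mul_card_le_card_sub_inter_sub_mul_card_add (S T : Finset G) :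
    #S * #T ≤ #((S - S) ∩ (T - T)) * #(S + T) := by
  rw [← Finset.card_product]
  have add_mem (p : G × G) (hp : p ∈ S ×ˢ T) : p.1 + p.2 ∈ S + T :=
    Finset.add_mem_add (Finset.mem_product.1 hp).1 (Finset.mem_product.1 hp).2
  refine Finset.card_le_mul_card_image_of_maps_to add_mem _ fun d _ ↦ ?_
  have translate_sub : (d +ᵥ -T) - (d +ᵥ -T) = T - T := by
    rw [← Finset.coe_inj]
    push_cast
    rw [Set.vadd_sub_vadd_comm, sub_self, zero_vadd, neg_sub_neg]
  calc #({p ∈ S ×ˢ T | p.1 + p.2 = d})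
      = #(S ∩ (d +ᵥ -T)) := by rw [Finset.card_add_eq, Finset.card_inter_vadd, neg_neg]
    _ ≤ #(S ∩ (d +ᵥ -T) - S ∩ (d +ᵥ -T)) := Finset.card_le_card_sub_self
    _ ≤ #((S - S) ∩ ((d +ᵥ -T) - (d +ᵥ -T))) := by
      gcongr
      exact Finset.subset_inter
        (Finset.sub_subset_sub Finset.inter_subset_left Finset.inter_subset_left)
        (Finset.sub_subset_sub Finset.inter_subset_right Finset.inter_subset_right)
    _ = #((S - S) ∩ (T - T)) := by rw [translate_sub]

/-- The stabilizer `Stab C = {g | g + C = C}` of a finite set `C` under translation, as a finite set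
so that it has a cardinality to appear in Kneser's theorem. Restricting to `C - C` changes nothing
when `C` is nonempty; the empty set gets `addStab ∅ = ∅`. -/
def addStab (C : Finset G) : Finset G := {g ∈ C - C | g ∈ AddAction.stabilizer G C}

variable {A B C D : Finset G} {c g h x : G}

theorem mem_addStab (hC : C.Nonempty) : g ∈ addStab C ↔ g ∈ AddAction.stabilizer G C := by
  refine ⟨fun hg ↦ (Finset.mem_filter.1 hg).2, fun hg ↦ Finset.mem_filter.2 ⟨?_, hg⟩⟩
  obtain ⟨x, hx⟩ := hC
  exact Finset.mem_sub.2
    ⟨g + x, AddAction.mem_stabilizer_finset'.1 hg hx, x, hx, add_sub_cancel_right g x⟩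

theorem coe_addStab (hC : C.Nonempty) : (addStab C : Set G) = AddAction.stabilizer G C :=
  Set.ext fun _ ↦ mem_addStab hC

theorem add_mem_iff_of_mem_addStab (hg : g ∈ addStab C) : x + g ∈ C ↔ x ∈ C := by
  simpa only [vadd_eq_add, add_comm] using
    AddAction.mem_stabilizer_finset.1 (Finset.mem_filter.1 hg).2 x

theorem zero_mem_addStab (hC : C.Nonempty) : 0 ∈ addStab C :=
  (mem_addStab hC).2 (zero_mem _)

theorem nonempty_of_mem_addStab (hg : g ∈ addStab C) : C.Nonempty := by
  obtain ⟨x, hx, -⟩ := Finset.mem_sub.1 (Finset.mem_filter.1 hg).1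
  exact ⟨x, hx⟩

theorem add_mem_addStab (hg : g ∈ addStab C) (hh : h ∈ addStab C) : g + h ∈ addStab C := by
  have hC := nonempty_of_mem_addStab hg
  rw [mem_addStab hC] at hg hh ⊢
  exact add_mem hg hh

theorem addStab_sub_addStab_subset : addStab C - addStab C ⊆ addStab C := by
  refine Finset.sub_subset_iff.2 fun g hg h hh ↦ ?_
  have hC := nonempty_of_mem_addStab hg
  rw [mem_addStab hC] at hg hh ⊢
  exact sub_mem hg hh

theorem add_addStab (C : Finset G) : C + addStab C = C := by
  rcases C.eq_empty_or_nonempty with rfl | hC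
  · exact Finset.empty_add _
  · exact (Finset.add_subset_iff.2 fun x hx g hg ↦ (add_mem_iff_of_mem_addStab hg).2 hx).antisymm
      (Finset.subset_add_left C (zero_mem_addStab hC))

theorem addStab_inter_addStab_subset_addStab_union :
    addStab C ∩ addStab D ⊆ addStab (C ∪ D) := by
  intro g hg
  obtain ⟨hgC, hgD⟩ := Finset.mem_inter.1 hg
  refine (mem_addStab ((nonempty_of_mem_addStab hgC).mono Finset.subset_union_left)).2 ?_
  rw [AddAction.mem_stabilizer_finset]
  intro x
  rw [vadd_eq_add, add_comm, Finset.mem_union, Finset.mem_union, add_mem_iff_of_mem_addStab hgC,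
    add_mem_iff_of_mem_addStab hgD]

theorem card_filter_notMem_mul_card_filter_mem_le (C D : Finset G) (c : G) :
    #{g ∈ addStab C | c + g ∉ D} * #{h ∈ addStab D | c + h ∈ C} ≤
      #(addStab C ∩ addStab D) * #(C \ D) := by
  set P : Finset G := {g ∈ addStab C | c + g ∉ D}
  set Q : Finset G := {h ∈ addStab D | c + h ∈ C}
  have hPC : P - P ⊆ addStab C :=
    (Finset.sub_subset_sub (Finset.filter_subset _ _) (Finset.filter_subset _ _)).trans
      addStab_sub_addStab_subset
  have hQD : Q - Q ⊆ addStab D :=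
    (Finset.sub_subset_sub (Finset.filter_subset _ _) (Finset.filter_subset _ _)).trans
      addStab_sub_addStab_subset
  have translate_subset : c +ᵥ (P + Q) ⊆ C \ D := by
    intro y hy
    obtain ⟨_, hz, rfl⟩ := Finset.mem_vadd_finset.1 hy
    obtain ⟨g, hg, h, hh, rfl⟩ := Finset.mem_add.1 hz
    obtain ⟨hgC, hgD⟩ := Finset.mem_filter.1 hg
    obtain ⟨hhD, hhC⟩ := Finset.mem_filter.1 hh
    rw [vadd_eq_add, Finset.mem_sdiff]
    constructor
    · rwa [add_left_comm, add_comm, add_mem_iff_of_mem_addStab hgC]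
    · rwa [← add_assoc, add_mem_iff_of_mem_addStab hhD]
  calc #P * #Q
      ≤ #((P - P) ∩ (Q - Q)) * #(P + Q) := card_mul_card_le_card_sub_inter_sub_mul_card_add P Q
    _ ≤ #(addStab C ∩ addStab D) * #(C \ D) := by
      refine Nat.mul_le_mul (Finset.card_le_card (Finset.inter_subset_inter hPC hQD)) ?_
      exact (Finset.card_vadd_finset c (P + Q)).symm.trans_le (Finset.card_le_card translate_subset)

theorem card_addStab_inter_addStab_le_card_filter (p : G → Prop) [DecidablePred p]
    (hp : ∀ x, p x → ∀ k ∈ addStab D, p (x + k)) (hne : {g ∈ addStab C | p g}.Nonempty) :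
    #(addStab C ∩ addStab D) ≤ #{g ∈ addStab C | p g} := by
  refine (Finset.card_le_card_add_left hne).trans (Finset.card_le_card ?_)
  refine Finset.add_subset_iff.2 fun x hx k hk ↦ ?_
  obtain ⟨hkC, hkD⟩ := Finset.mem_inter.1 hk
  obtain ⟨hxC, hpx⟩ := Finset.mem_filter.1 hx
  exact Finset.mem_filter.2 ⟨add_mem_addStab hxC hkC, hp x hpx k hkD⟩

theorem card_addStab_inter_addStab_le_card_filter_mem
    (hne : {g ∈ addStab C | c + g ∈ D}.Nonempty) :
    #(addStab C ∩ addStab D) ≤ #{g ∈ addStab C | c + g ∈ D} :=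
  card_addStab_inter_addStab_le_card_filter _ (fun x hx k hk ↦ by
    rwa [← add_assoc, add_mem_iff_of_mem_addStab hk]) hne

theorem card_addStab_inter_addStab_le_card_filter_notMem
    (hne : {g ∈ addStab C | c + g ∉ D}.Nonempty) :
    #(addStab C ∩ addStab D) ≤ #{g ∈ addStab C | c + g ∉ D} :=
  card_addStab_inter_addStab_le_card_filter _ (fun x hx k hk ↦ by
    rwa [← add_assoc, add_mem_iff_of_mem_addStab hk]) hne

-- `D` cuts `c + Stab C` into two parts, and `C` cuts `c + Stab D`; each of the four parts is a
-- union of cosets of `Stab C ∩ Stab D`, hence empty or at least as large as this intersection.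
theorem card_addStab_le_card_sdiff_add_or (hcC : c ∈ C) (hcD : c ∉ D) (hD : D.Nonempty)
    (hle : #(addStab D) ≤ #(addStab C)) :
    #(addStab D) ≤ #(C \ D) + #(addStab C ∩ addStab D) ∨
      #(addStab C) ≤ #(D \ C) + #(addStab C ∩ addStab D) := by
  have hk : 0 < #(addStab C ∩ addStab D) := Finset.card_pos.2
    ⟨0, Finset.mem_inter.2 ⟨zero_mem_addStab ⟨c, hcC⟩, zero_mem_addStab hD⟩⟩
  have splitC := Finset.card_filter_add_card_filter_not (s := addStab C) (fun g ↦ c + g ∈ D)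
  have splitD := Finset.card_filter_add_card_filter_not (s := addStab D) (fun g ↦ c + g ∈ C)
  have outC := card_addStab_inter_addStab_le_card_filter_notMem (C := C) (D := D) (c := c)
    ⟨0, by simpa [hcD] using zero_mem_addStab ⟨c, hcC⟩⟩
  have inD := card_addStab_inter_addStab_le_card_filter_mem (C := D) (D := C) (c := c)
    ⟨0, by simpa [hcC] using zero_mem_addStab hD⟩
  rw [Finset.inter_comm] at inD
  have sdiffC : #{g ∈ addStab C | c + g ∉ D} + #{g ∈ addStab D | c + g ∈ C} ≤
      #(C \ D) + #(addStab C ∩ addStab D) :=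
    add_le_add_of_mul_le_mul hk outC inD (card_filter_notMem_mul_card_filter_mem_le C D c)
  rcases Finset.eq_empty_or_nonempty {g ∈ addStab C | c + g ∈ D} with hinC | hinC
  · left
    rw [hinC, Finset.card_empty] at splitC
    omega
  rcases Finset.eq_empty_or_nonempty {g ∈ addStab D | c + g ∉ C} with houtD | houtD
  · left
    rw [houtD, Finset.card_empty] at splitD
    omega
  have inC := card_addStab_inter_addStab_le_card_filter_mem hinC
  have outD := card_addStab_inter_addStab_le_card_filter_notMem houtD
  have sdiffD : #{g ∈ addStab D | c + g ∉ C} + #{g ∈ addStab C | c + g ∈ D} ≤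
      #(D \ C) + #(addStab C ∩ addStab D) := by
    have hmul := card_filter_notMem_mul_card_filter_mem_le D C c
    rw [Finset.inter_comm] at outD hmul
    exact add_le_add_of_mul_le_mul hk outD inC hmul
  omega

theorem min_card_add_card_addStab_le_union_of_card_addStab_le (hCD : ¬C ⊆ D) (hDC : ¬D ⊆ C)
    (hle : #(addStab D) ≤ #(addStab C)) :
    min (#C + #(addStab C)) (#D + #(addStab D)) ≤ #(C ∪ D) + #(addStab (C ∪ D)) := by
  obtain ⟨c, hcC, hcD⟩ := Finset.not_subset.1 hCD
  obtain ⟨d, hdD, -⟩ := Finset.not_subset.1 hDC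
  have hstab := Finset.card_le_card (addStab_inter_addStab_subset_addStab_union (C := C) (D := D))
  have hunionC := Finset.card_sdiff_add_card C D
  have hunionD := Finset.card_sdiff_add_card D C
  rw [Finset.union_comm] at hunionD
  rcases card_addStab_le_card_sdiff_add_or hcC hcD ⟨d, hdD⟩ hle with h | h <;> omega

theorem min_card_add_card_addStab_le_union (C D : Finset G) :
    min (#C + #(addStab C)) (#D + #(addStab D)) ≤ #(C ∪ D) + #(addStab (C ∪ D)) := by
  by_cases hCD : C ⊆ D
  · rw [Finset.union_eq_right.2 hCD]
    exact min_le_right _ _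
  by_cases hDC : D ⊆ C
  · rw [Finset.union_eq_left.2 hDC]
    exact min_le_left _ _
  rcases le_total #(addStab D) #(addStab C) with h | h
  · exact min_card_add_card_addStab_le_union_of_card_addStab_le hCD hDC h
  · rw [min_comm, Finset.union_comm]
    exact min_card_add_card_addStab_le_union_of_card_addStab_le hDC hCD h

theorem subset_addStab_of_add_subset (hA : A.Nonempty) (h : A + B ⊆ A) : B ⊆ addStab A :=
  fun b hb ↦ (mem_addStab hA).2 <| AddAction.mem_stabilizer_finset'.2 fun a ha ↦ by
    rw [vadd_eq_add, add_comm]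
    exact h (Finset.add_mem_add ha hb)

theorem exists_subset_add_card_add_card_le_of_mem_left (hc : c ∈ A) (h0 : 0 ∈ B) :
    ∃ C ⊆ A + B, c ∈ C ∧ #A + #B ≤ #C + #(addStab C) := by
  induction B using Finset.strongInduction generalizing A with
  | H B ih =>
    by_cases hAB : A + B ⊆ A
    · refine ⟨A, Finset.subset_add_left A h0, hc, ?_⟩
      gcongr
      exact subset_addStab_of_add_subset ⟨c, hc⟩ hAB
    simp only [Finset.add_subset_iff, not_forall] at hAB
    obtain ⟨e, he, b, hb, heb⟩ := hAB
    have hlt : B ∩ (-e +ᵥ A) ⊂ B := by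
      refine Finset.inter_subset_left.ssubset_of_mem_notMem hb fun hmem ↦ heb ?_
      simpa [Finset.mem_neg_vadd_finset_iff] using Finset.mem_of_mem_inter_right hmem
    obtain ⟨C, hC, hcC, hcard⟩ := ih _ hlt (A := A ∪ (e +ᵥ B)) (Finset.mem_union_left _ hc)
      (by simp [h0, he, Finset.mem_neg_vadd_finset_iff])
    exact ⟨C, hC.trans (Finset.addDysonETransform.subset e (A, B)), hcC,
      (Finset.addDysonETransform.card e (A, B)).symm.trans_le hcard⟩

theorem exists_subset_add_card_add_card_le_of_mem_add (hc : c ∈ A + B) :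
    ∃ C ⊆ A + B, c ∈ C ∧ #A + #B ≤ #C + #(addStab C) := by
  obtain ⟨a, ha, b, hb, rfl⟩ := Finset.mem_add.1 hc
  have h0 : 0 ∈ -b +ᵥ B := by simpa [Finset.mem_neg_vadd_finset_iff] using hb
  have hab : a + b ∈ b +ᵥ A := by
    simpa only [vadd_eq_add, add_comm] using Finset.vadd_mem_vadd_finset (a := b) ha
  have hAB : (b +ᵥ A) + (-b +ᵥ B) = A + B := by
    rw [vadd_add_assoc, add_vadd_comm, vadd_neg_vadd]
  simpa only [hAB, Finset.card_vadd_finset] using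
    exists_subset_add_card_add_card_le_of_mem_left hab h0

theorem card_add_card_le_card_add_add_card_addStab (hA : A.Nonempty) (hB : B.Nonempty) :
    #A + #B ≤ #(A + B) + #(addStab (A + B)) := by
  choose! f hf_sub hf_mem hf_card using fun c ↦
    exists_subset_add_card_add_card_le_of_mem_add (A := A) (B := B) (c := c)
  have hAB := hA.add hB
  have hsup : (A + B).sup' hAB f = A + B :=
    (Finset.sup'_le _ _ hf_sub).antisymm fun c hc ↦ Finset.le_sup' f hc (hf_mem c hc)
  rw [← hsup]
  exact Finset.sup'_induction (p := fun C ↦ #A + #B ≤ #C + #(addStab C)) hAB f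
    (fun C hC D hD ↦ (le_min hC hD).trans (min_card_add_card_addStab_le_union C D)) hf_card

theorem kneser (hA : A.Nonempty) (hB : B.Nonempty) :
    #(A + addStab (A + B)) + #(B + addStab (A + B)) ≤ #(A + B) + #(addStab (A + B)) := by
  have hH : (addStab (A + B)).Nonempty := ⟨0, zero_mem_addStab (hA.add hB)⟩
  have hAB : A + addStab (A + B) + (B + addStab (A + B)) = A + B := by
    rw [add_add_add_comm, ← add_assoc, add_addStab, add_addStab]
  simpa only [hAB] using card_add_card_le_card_add_add_card_addStab (hA.add hH) (hB.add hH)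

theorem card_addStab_dvd_card_add (A : Finset G) (hC : C.Nonempty) :
    #(addStab C) ∣ #(A + addStab C) := by
  have h := AddSubgroup.card_add_eq_card_addSubgroup_add_card_quotient (AddAction.stabilizer G C) A
  rw [← SetLike.coe_sort_coe, ← coe_addStab hC, ← Finset.coe_add, Nat.card_coe_set_eq,
    Nat.card_coe_set_eq, Set.ncard_coe_finset, Set.ncard_coe_finset] at h
  exact ⟨_, h⟩

theorem card_addStab_dvd_card (hC : C.Nonempty) : #(addStab C) ∣ Nat.card G := by
  rw [← Set.ncard_coe_finset, coe_addStab hC]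
  exact AddSubgroup.card_addSubgroup_dvd_card (AddAction.stabilizer G C)

theorem four_mul_card_lt_of_two_mul_card_add_self_lt
    (hG : ∀ d, d ∣ Nat.card G → d % 4 = 1 ∨ d % 4 = 2)
    (h2A : 2 * #(A + A) < Nat.card G) :
    4 * #A < Nat.card G := by
  rcases A.eq_empty_or_nonempty with rfl | hA
  · simpa using h2A
  set H := addStab (A + A)
  have hH0 : 0 ∈ H := zero_mem_addStab (hA.add hA)
  have hle : #A ≤ #(A + H) := Finset.card_le_card (Finset.subset_add_left A hH0)
  have hkneser : #(A + H) + #(A + H) ≤ #(A + A) + #H := kneser hA hA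
  obtain ⟨a, ha⟩ : #H ∣ #(A + H) := card_addStab_dvd_card_add A (hA.add hA)
  obtain ⟨q, hq⟩ : #H ∣ Nat.card G := card_addStab_dvd_card (hA.add hA)
  have hH_pos : 0 < #H := Finset.card_pos.2 ⟨0, hH0⟩
  have hqmod := hG q (hq ▸ dvd_mul_left q _)
  have hlt : 4 * a < q + 2 := lt_of_mul_lt_mul_left (a := #H) (by linarith) (Nat.zero_le _)
  calc 4 * #A ≤ #H * (4 * a) := by linarith
    _ < #H * q := Nat.mul_lt_mul_of_pos_left (by omega) hH_pos
    _ = Nat.card G := hq.symm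

end Kneser

theorem mod_four_eq_one_of_dvd_five_pow {d n : ℕ} (h : d ∣ 5 ^ n) : d % 4 = 1 := by
  obtain ⟨j, -, rfl⟩ := (Nat.dvd_prime_pow Nat.prime_five).1 h
  simp [Nat.pow_mod]

theorem itSum_two {G : Type*} [AddCommGroup G] (A : Set G) : itSum 2 A = A + A := by
  simp [itSum]

theorem stmt3_general {G : Type*} [AddCommGroup G] [Finite G]
    (hG : ∀ d, d ∣ Nat.card G → d % 4 = 1 ∨ d % 4 = 2) (A : Set G)
    (h2A : ((itSum 2 A).ncard : ℝ) < 0.5 * Nat.card G) :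
    (A.ncard : ℝ) < 0.25 * Nat.card G := by
  classical
  lift A to Finset G using A.toFinite
  rw [itSum_two, ← Finset.coe_add, Set.ncard_coe_finset] at h2A
  rw [Set.ncard_coe_finset]
  have h2 : 2 * #(A + A) < Nat.card G := by
    rify
    linarith
  have h4 : (4 : ℝ) * #A < Nat.card G :=
    mod_cast four_mul_card_lt_of_two_mul_card_add_self_lt hG h2
  linarith

/-- If `A ⊆ (ℤ/5ℤ)ⁿ` satisfies `|2A| < 0.5·5ⁿ`, then `|A| < 0.25·5ⁿ`. -/
theorem stmt3 (n : ℕ) (hn : 1 ≤ n) (A : Set (Fin n → ZMod 5))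
    (h2A : ((itSum 2 A).ncard : ℝ) < 0.5 * 5 ^ n) :
    (A.ncard : ℝ) < 0.25 * 5 ^ n := by
  have hcard : Nat.card (Fin n → ZMod 5) = 5 ^ n := by simp
  simpa [hcard] using stmt3_general
    (fun d hd ↦ .inl <| mod_four_eq_one_of_dvd_five_pow (hcard ▸ hd)) A (by simpa [hcard] using h2A)
end

section
/- Let n ≥ 1 be an integer and let A, B, C be subsets of G = (ℤ/5ℤ)^n with densities α = 5^(-n)|A|, β = 5^(-n)|B|, γ = 5^(-n)|C|. If 0.4 < α < 0.5, 0.4 < β < 0.5, and α + β + 3γ > 1.5, then A + B + C = G. -/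
open Pointwise

/-!
Kneser's theorem `|A| + |B| ≤ |A + B| + |stab (A + B)|` is proved in two steps. Dyson's
`e`-transform yields, around every point of `A + B`, a subset `D ⊆ A + B` with
`|A| + |B| ≤ |D| + |stab D|`. A lemma of Kemperman says that this inequality survives taking
unions, so it holds for `A + B` itself.

Suppose that `S = A + B + C` is not everything. Passing to the quotient by `stab S` does not
decrease densities and makes the stabilizer trivial, so that two applications of Kneser's theorem
give `|A| + |B| + |C| ≤ |S| + 2 ≤ |G| + 1`. The quotient is nontrivial, so in a `p`-group its order
is divisible by `p` and the condition `|A| > i|G|/p` gains a unit by integrality,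
`|A| ≥ i|G|/p + 1`; likewise for `B`. Subtracting these two from twice the previous inequality
bounds `|A| + |B| + 2|C|` by `(2p - i - j)|G|/p`.
-/

section Kneser

open AddAction

variable {G : Type*} [AddCommGroup G]

section Kemperman

variable {H₁ H₂ : AddSubgroup G} {C₁ C₂ D D₁ D₂ : Set G} {c : G}

theorem card_inf_le_ncard_coset_inter [Finite H₁] (hH₂ : H₂ ≤ stabilizer G D)
    (hne : ((c +ᵥ (H₁ : Set G)) ∩ D).Nonempty) :
    Nat.card ↥(H₁ ⊓ H₂) ≤ ((c +ᵥ (H₁ : Set G)) ∩ D).ncard := by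
  obtain ⟨x, hxH₁, hxD⟩ := hne
  have hsub : x +ᵥ ((H₁ ⊓ H₂ : AddSubgroup G) : Set G) ⊆ (c +ᵥ (H₁ : Set G)) ∩ D := by
    rintro _ ⟨y, ⟨hyH₁, hyH₂⟩, rfl⟩
    refine ⟨?_, ?_⟩
    · rw [mem_leftAddCoset_iff] at hxH₁ ⊢
      simpa [add_assoc] using H₁.add_mem hxH₁ hyH₁
    · simpa [add_comm x y] using (mem_stabilizer_set.1 (hH₂ hyH₂) x).2 hxD
  have hfin : (c +ᵥ (H₁ : Set G)).Finite := (Set.toFinite (H₁ : Set G)).vadd_set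
  calc Nat.card ↥(H₁ ⊓ H₂) = (x +ᵥ ((H₁ ⊓ H₂ : AddSubgroup G) : Set G)).ncard :=
        (Set.ncard_vadd_set x _).symm
    _ ≤ _ := Set.ncard_le_ncard hsub (hfin.inter_of_left D)

theorem sub_mem_inf_of_add_eq_add {x x' y y' : G} (hx : x ∈ c +ᵥ (H₁ : Set G))
    (hx' : x' ∈ c +ᵥ (H₁ : Set G)) (hy : y ∈ c +ᵥ (H₂ : Set G)) (hy' : y' ∈ c +ᵥ (H₂ : Set G))
    (h : x + y = x' + y') : x - x' ∈ H₁ ⊓ H₂ := by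
  rw [mem_leftAddCoset_iff] at hx hx' hy hy'
  refine AddSubgroup.mem_inf.2 ⟨?_, ?_⟩
  · simpa using H₁.sub_mem hx hx'
  · rw [sub_eq_sub_iff_add_eq_add.2 (h.trans (add_comm x' y'))]
    simpa using H₂.sub_mem hy' hy

theorem ncard_coset_inter_mul_ncard_coset_inter_le [Finite H₁] (h₁ : H₁ ≤ stabilizer G D₁)
    (h₂ : H₂ ≤ stabilizer G D₂) (hfin : (D₁ ∩ D₂).Finite) :
    ((c +ᵥ (H₁ : Set G)) ∩ D₂).ncard * ((c +ᵥ (H₂ : Set G)) ∩ D₁).ncard ≤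
      (D₁ ∩ D₂).ncard * Nat.card ↥(H₁ ⊓ H₂) := by
  set X := (c +ᵥ (H₁ : Set G)) ∩ D₂
  set Y := (c +ᵥ (H₂ : Set G)) ∩ D₁
  let φ : G × G → G := fun q ↦ q.1 + q.2 - c
  -- `r z` is a base point of the fibre of `φ` over `z`.
  let r : G → G × G := Function.invFunOn φ (X ×ˢ Y)
  have hφ (q) (hq : q ∈ X ×ˢ Y) : φ q ∈ D₁ ∩ D₂ := by
    obtain ⟨⟨hx, hxD⟩, hy, hyD⟩ := hq
    rw [mem_leftAddCoset_iff] at hx hy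
    constructor
    · convert (mem_stabilizer_set.1 (h₁ hx) q.2).2 hyD using 1
      simp only [φ, vadd_eq_add]; abel
    · convert (mem_stabilizer_set.1 (h₂ hy) q.1).2 hxD using 1
      simp only [φ, vadd_eq_add]; abel
  have hr (q) (hq : q ∈ X ×ˢ Y) : q.1 - (r (φ q)).1 ∈ H₁ ⊓ H₂ := by
    obtain ⟨hrq, heq⟩ : r (φ q) ∈ X ×ˢ Y ∧ φ (r (φ q)) = φ q :=
      Function.invFunOn_pos ⟨q, hq, rfl⟩
    exact sub_mem_inf_of_add_eq_add hq.1.1 hrq.1.1 hq.2.1 hrq.2.1 (sub_left_injective heq.symm)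
  have hinj : Set.InjOn (fun q ↦ (φ q, q.1 - (r (φ q)).1)) (X ×ˢ Y) := by
    rintro ⟨x, y⟩ - ⟨x', y'⟩ - h
    obtain ⟨hxy, hx⟩ := Prod.mk.inj h
    obtain rfl : x = x' := by simpa only [hxy, sub_left_inj] using hx
    simpa [φ] using hxy
  calc X.ncard * Y.ncard = (X ×ˢ Y).ncard := Set.ncard_prod.symm
    _ ≤ ((D₁ ∩ D₂) ×ˢ ((H₁ ⊓ H₂ : AddSubgroup G) : Set G)).ncard :=
      Set.ncard_le_ncard_of_injOn _ (fun q hq ↦ ⟨hφ q hq, hr q hq⟩) hinj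
        (hfin.prod ((Set.toFinite (H₁ : Set G)).inter_of_left _))
    _ = _ := Set.ncard_prod

theorem stabilizer_compl_eq : stabilizer G Dᶜ = stabilizer G D := by
  ext x
  simp only [mem_stabilizer_set, Set.mem_compl_iff, not_iff_not]

theorem ncard_coset_inter_add_ncard_coset_inter_compl [Finite H₁] :
    ((c +ᵥ (H₁ : Set G)) ∩ D).ncard + ((c +ᵥ (H₁ : Set G)) ∩ Dᶜ).ncard = Nat.card H₁ := by
  have hfin : (c +ᵥ (H₁ : Set G)).Finite := (Set.toFinite (H₁ : Set G)).vadd_set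
  rw [← Set.sdiff_eq, Set.ncard_inter_add_ncard_sdiff_eq_ncard _ _ hfin, Set.ncard_vadd_set]
  rfl

theorem add_le_add_of_mul_le_mul_s5 {h p q u X : ℕ} (hh : 0 < h) (hp : h ≤ p) (hu : h ≤ u)
    (hqp : q ≤ p) (hX : p * u ≤ X * h) : u + q ≤ X + h := by
  refine Nat.le_of_mul_le_mul_left ?_ hh
  zify at *
  -- `(X + h) * h - (u + q) * h = (X * h - p * u) + (p - h) * (u - h) + h * (p - q)`
  linarith [mul_nonneg (sub_nonneg.2 hp) (sub_nonneg.2 hu), mul_nonneg hh.le (sub_nonneg.2 hqp)]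

theorem card_le_or_card_le_of_mem_sdiff [Finite H₁] [Finite H₂] (hC₁ : C₁.Finite) (hC₂ : C₂.Finite)
    (h₁ : H₁ ≤ stabilizer G C₁) (h₂ : H₂ ≤ stabilizer G C₂) (hle : Nat.card H₂ ≤ Nat.card H₁)
    (hc : c ∈ C₁ \ C₂) :
    Nat.card H₂ ≤ (C₁ \ C₂).ncard + Nat.card ↥(H₁ ⊓ H₂) ∨
      Nat.card H₁ ≤ (C₂ \ C₁).ncard + Nat.card ↥(H₁ ⊓ H₂) := by
  have h₁' : H₁ ≤ stabilizer G C₁ᶜ := h₁.trans_eq stabilizer_compl_eq.symm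
  have h₂' : H₂ ≤ stabilizer G C₂ᶜ := h₂.trans_eq stabilizer_compl_eq.symm
  have : Finite ↥(H₁ ⊓ H₂) := Finite.of_injective _ (AddSubgroup.inclusion_injective inf_le_left)
  set p := ((c +ᵥ (H₁ : Set G)) ∩ C₂ᶜ).ncard
  set p' := ((c +ᵥ (H₁ : Set G)) ∩ C₂).ncard
  set q := ((c +ᵥ (H₂ : Set G)) ∩ C₁ᶜ).ncard
  set q' := ((c +ᵥ (H₂ : Set G)) ∩ C₁).ncard
  have hp_add : p' + p = Nat.card H₁ := ncard_coset_inter_add_ncard_coset_inter_compl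
  have hq_add : q' + q = Nat.card H₂ := ncard_coset_inter_add_ncard_coset_inter_compl
  have hp : Nat.card ↥(H₁ ⊓ H₂) ≤ p :=
    card_inf_le_ncard_coset_inter h₂' ⟨c, mem_own_leftAddCoset H₁.toAddSubmonoid c, hc.2⟩
  have hq' : Nat.card ↥(H₁ ⊓ H₂) ≤ q' := inf_comm H₁ H₂ ▸
    card_inf_le_ncard_coset_inter h₁ ⟨c, mem_own_leftAddCoset H₂.toAddSubmonoid c, hc.1⟩
  have hpq' : p * q' ≤ (C₁ \ C₂).ncard * Nat.card ↥(H₁ ⊓ H₂) :=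
    ncard_coset_inter_mul_ncard_coset_inter_le h₁ h₂' (hC₁.inter_of_left _)
  have hp'q : p' * q ≤ (C₁ᶜ ∩ C₂).ncard * Nat.card ↥(H₁ ⊓ H₂) :=
    ncard_coset_inter_mul_ncard_coset_inter_le h₁' h₂ (hC₂.inter_of_right _)
  rw [Set.inter_comm, ← Set.sdiff_eq] at hp'q
  rcases le_or_gt q p with hqp | hpq
  · exact .inl (hq_add ▸ add_le_add_of_mul_le_mul_s5 Nat.card_pos hp hq' hqp hpq')
  · have hp'_pos : 0 < p' := by omega
    have hp' : Nat.card ↥(H₁ ⊓ H₂) ≤ p' :=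
      card_inf_le_ncard_coset_inter h₂ (Set.nonempty_of_ncard_ne_zero hp'_pos.ne')
    exact .inr (hp_add ▸ add_le_add_of_mul_le_mul_s5 Nat.card_pos (hp.trans hpq.le) hp' hpq.le
      (mul_comm p' q ▸ hp'q))

theorem finite_stabilizer (hD : D.Finite) (hne : D.Nonempty) : Finite (stabilizer G D) :=
  (stabilizer_finite hne hD).to_subtype

theorem card_le_card_stabilizer (hD : D.Finite) (hne : D.Nonempty) (hH : H₁ ≤ stabilizer G D) :
    Nat.card H₁ ≤ Nat.card (stabilizer G D) :=
  haveI := finite_stabilizer hD hne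
  AddSubgroup.card_le_of_le hH

theorem le_ncard_union_add_card_stabilizer (hC₁ : C₁.Finite) (hC₂ : C₂.Finite) (hne₁ : C₁.Nonempty)
    (hne₂ : C₂.Nonempty) {k : ℕ} (hk₁ : k ≤ C₁.ncard + Nat.card (stabilizer G C₁))
    (hk₂ : k ≤ C₂.ncard + Nat.card (stabilizer G C₂)) :
    k ≤ (C₁ ∪ C₂).ncard + Nat.card (stabilizer G (C₁ ∪ C₂)) := by
  wlog hle : Nat.card (stabilizer G C₂) ≤ Nat.card (stabilizer G C₁) generalizing C₁ C₂
  · rw [Set.union_comm]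
    exact this hC₂ hC₁ hne₂ hne₁ hk₂ hk₁ (le_of_not_ge hle)
  rcases Set.eq_empty_or_nonempty (C₁ \ C₂) with hempty | ⟨c, hc⟩
  · rwa [Set.union_eq_right.2 (Set.sdiff_eq_empty.1 hempty)]
  have := finite_stabilizer hC₁ hne₁
  have := finite_stabilizer hC₂ hne₂
  have hinf : Nat.card ↥(stabilizer G C₁ ⊓ stabilizer G C₂) ≤
      Nat.card (stabilizer G (C₁ ∪ C₂)) :=
    card_le_card_stabilizer (hC₁.union hC₂) (hne₁.mono Set.subset_union_left)
      stabilizer_inf_stabilizer_le_stabilizer_union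
  have hcard₁ : (C₁ \ C₂).ncard + C₂.ncard = (C₁ ∪ C₂).ncard :=
    Set.ncard_sdiff_add_ncard C₁ C₂ hC₁ hC₂
  have hcard₂ : (C₂ \ C₁).ncard + C₁.ncard = (C₁ ∪ C₂).ncard :=
    Set.union_comm C₁ C₂ ▸ Set.ncard_sdiff_add_ncard C₂ C₁ hC₂ hC₁
  rcases card_le_or_card_le_of_mem_sdiff hC₁ hC₂ le_rfl le_rfl hle hc with h | h <;> omega

end Kemperman

variable {A B C : Set G}

theorem le_ncard_add_card_stabilizer_of_forall_mem (hC : C.Finite) (hne : C.Nonempty) {k : ℕ}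
    (h : ∀ c ∈ C, ∃ D ⊆ C, c ∈ D ∧ k ≤ D.ncard + Nat.card (stabilizer G D)) :
    k ≤ C.ncard + Nat.card (stabilizer G C) := by
  let P : Set G → Prop := fun D ↦ D ⊆ C ∧ D.Nonempty ∧ k ≤ D.ncard + Nat.card (stabilizer G D)
  have hP : {D | P D}.Nonempty := by
    obtain ⟨c, hc⟩ := hne
    obtain ⟨D, hDC, hcD, hkD⟩ := h c hc
    exact ⟨D, hDC, ⟨c, hcD⟩, hkD⟩
  obtain ⟨D, ⟨hDC, hDne, hkD⟩, hmax⟩ :=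
    (hC.finite_subsets.subset fun _ hD ↦ hD.1).exists_maximal hP
  suffices hCD : C ⊆ D by rwa [hCD.antisymm hDC]
  intro c hc
  obtain ⟨E, hEC, hcE, hkE⟩ := h c hc
  have hDE : P (D ∪ E) := ⟨Set.union_subset hDC hEC, hDne.mono Set.subset_union_left,
    le_ncard_union_add_card_stabilizer (hC.subset hDC) (hC.subset hEC) hDne ⟨c, hcE⟩ hkD hkE⟩
  exact hmax hDE Set.subset_union_left (Set.mem_union_right D hcE)

theorem ncard_le_card_stabilizer_of_forall_add_mem {b₀ : G} (hA : A.Finite) (hne : A.Nonempty)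
    (h : ∀ b ∈ B, ∀ a ∈ A, b - b₀ + a ∈ A) : B.ncard ≤ Nat.card (stabilizer G A) := by
  refine Set.ncard_le_ncard_of_injOn (t := stabilizer G A) (· - b₀) (fun b hb ↦ ?_)
    sub_left_injective.injOn (stabilizer_finite hne hA)
  exact (mem_stabilizer_set' hA).2 (h b hb)

theorem stabilizer_le_stabilizer_add (A B : Set G) : stabilizer G A ≤ stabilizer G (A + B) := by
  intro x hx
  rw [mem_stabilizer_iff] at hx ⊢
  rw [← vadd_add_assoc, hx]

theorem exists_dyson_card_lt [DecidableEq G] {A B : Finset G} {a b b' : G} (ha : a ∈ A) (hb : b ∈ B)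
    (hb' : b' ∈ B) (hnot : b' - b + a ∉ A) :
    ∃ A' B' : Finset G, A ⊆ A' ∧ b ∈ B' ∧ B'.card < B.card ∧ A' + B' ⊆ A + B ∧
      A'.card + B'.card = A.card + B.card := by
  let T := Finset.addDysonETransform (a - b) (A, B)
  refine ⟨T.1, T.2, Finset.subset_union_left, ?_, Finset.card_lt_card ?_,
    Finset.addDysonETransform.subset _ _, Finset.addDysonETransform.card _ _⟩
  · exact Finset.mem_inter.2 ⟨hb, Finset.mem_neg_vadd_finset_iff.2 (by simpa using ha)⟩
  · refine Finset.inter_subset_left.ssubset_of_mem_notMem hb' fun h ↦ hnot ?_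
    have hmem := Finset.mem_neg_vadd_finset_iff.1 (Finset.mem_of_mem_inter_right h)
    rwa [vadd_eq_add, sub_add_eq_add_sub, add_comm, add_sub_right_comm] at hmem

theorem exists_subset_add_of_mem_add (A B : Finset G) {a b : G} (ha : a ∈ A) (hb : b ∈ B) :
    ∃ D ⊆ (A : Set G) + B, a + b ∈ D ∧ A.card + B.card ≤ D.ncard + Nat.card (stabilizer G D) := by
  classical
  induction hN : B.card using Nat.strong_induction_on generalizing A B with | _ N ih
  subst hN
  by_cases hstab : ∀ b' ∈ B, ∀ a' ∈ A, b' - b + a' ∈ A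
  · have hfin : ((A : Set G) + {b}).Finite := A.finite_toSet.add (Set.finite_singleton b)
    have hB : B.card ≤ Nat.card (stabilizer G (A : Set G)) := by
      simpa only [Set.ncard_coe_finset] using
        ncard_le_card_stabilizer_of_forall_add_mem A.finite_toSet ⟨a, ha⟩ hstab
    have hcard : ((A : Set G) + {b}).ncard = A.card := by
      rw [Set.add_singleton, Set.ncard_image_of_injective _ (add_left_injective b),
        Set.ncard_coe_finset]
    refine ⟨A + {b}, Set.add_subset_add_left (by simpa using hb), Set.add_mem_add ha rfl, ?_⟩
    rw [hcard]
    gcongr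
    exact hB.trans (card_le_card_stabilizer hfin ⟨a + b, Set.add_mem_add ha rfl⟩
      (stabilizer_le_stabilizer_add _ _))
  · push Not at hstab
    obtain ⟨b', hb', a', ha', hnot⟩ := hstab
    obtain ⟨A', B', hAA', hbB', hlt, hsub, hcard⟩ := exists_dyson_card_lt ha' hb hb' hnot
    obtain ⟨D, hD, hmem, hk⟩ := ih _ hlt A' B' (hAA' ha) hbB' rfl
    exact ⟨D, hD.trans (by exact_mod_cast hsub), hmem, hcard ▸ hk⟩

theorem ncard_add_ncard_le_ncard_add_add_card_stabilizer (hA : A.Finite) (hB : B.Finite)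
    (hAne : A.Nonempty) (hBne : B.Nonempty) :
    A.ncard + B.ncard ≤ (A + B).ncard + Nat.card (stabilizer G (A + B)) := by
  classical
  lift A to Finset G using hA
  lift B to Finset G using hB
  refine le_ncard_add_card_stabilizer_of_forall_mem (A.finite_toSet.add B.finite_toSet)
    (hAne.add hBne) ?_
  rintro _ ⟨a, ha, b, hb, rfl⟩
  simpa only [Set.ncard_coe_finset] using exists_subset_add_of_mem_add A B ha hb

theorem ncard_add_ncard_add_ncard_le_of_stabilizer_eq_bot (hA : A.Finite) (hB : B.Finite)
    (hC : C.Finite) (hAne : A.Nonempty) (hBne : B.Nonempty) (hCne : C.Nonempty)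
    (hstab : stabilizer G (A + B + C) = ⊥) :
    A.ncard + B.ncard + C.ncard ≤ (A + B + C).ncard + 2 := by
  have hstab' : stabilizer G (A + B) = ⊥ :=
    le_bot_iff.1 ((stabilizer_le_stabilizer_add (A + B) C).trans_eq hstab)
  have hAB := ncard_add_ncard_le_ncard_add_add_card_stabilizer hA hB hAne hBne
  have hABC := ncard_add_ncard_le_ncard_add_add_card_stabilizer (hA.add hB) hC (hAne.add hBne) hCne
  rw [hstab', AddSubgroup.card_bot] at hAB
  rw [hstab, AddSubgroup.card_bot] at hABC
  omega

end Kneser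

section Quotient

open AddAction

variable {G : Type*} [AddCommGroup G] {A B C : Set G} {p n i j : ℕ}

theorem nonempty_of_lt_ncard_div {α : Type*} {s : Set α} {x y : ℝ} (hx : 0 ≤ x)
    (h : x < s.ncard / y) : s.Nonempty := by
  contrapose! h
  simpa [h] using hx

theorem ncard_le_card_mul_ncard_image_mk [Finite G] (H : AddSubgroup G) (A : Set G) :
    A.ncard ≤ Nat.card H * ((↑) '' A : Set (G ⧸ H)).ncard := by
  rw [← Nat.card_coe_set_eq (_ '' A), ← AddSubgroup.card_add_eq_card_addSubgroup_add_card_quotient]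
  exact Set.ncard_le_ncard (Set.subset_add_left A H.zero_mem)

theorem ncard_div_card_le_ncard_image_mk_div_card [Finite G] (H : AddSubgroup G) (A : Set G) :
    (A.ncard : ℝ) / Nat.card G ≤
      (((↑) '' A : Set (G ⧸ H)).ncard : ℝ) / Nat.card (G ⧸ H) := by
  have hH : (0 : ℝ) < Nat.card H := by exact_mod_cast Nat.card_pos
  have hA : (A.ncard : ℝ) ≤ Nat.card H * ((↑) '' A : Set (G ⧸ H)).ncard := by
    exact_mod_cast ncard_le_card_mul_ncard_image_mk H A
  rw [H.card_eq_card_quotient_mul_card_addSubgroup, mul_comm, Nat.cast_mul, ← div_div]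
  gcongr
  exact (div_le_iff₀' hH).2 hA

theorem image_mk_stabilizer_ne_univ {S : Set G} (hS : S ≠ Set.univ) :
    ((↑) '' S : Set (G ⧸ stabilizer G S)) ≠ Set.univ := by
  contrapose! hS
  rw [← Set.image_univ_of_surjective (QuotientAddGroup.mk_surjective (s := stabilizer G S)),
    QuotientAddGroup.image_coe_inj, stabilizer_add_self] at hS
  exact hS.trans (Set.eq_univ_of_univ_subset
    (Set.subset_add_right Set.univ (AddSubgroup.zero_mem (stabilizer G S))))

theorem dvd_card_quotient_of_card_eq_prime_pow (hp : p.Prime) (hG : Nat.card G = p ^ n)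
    (H : AddSubgroup G) [Nontrivial (G ⧸ H)] : p ∣ Nat.card (G ⧸ H) := by
  have : Finite G := Nat.finite_of_card_ne_zero (hG ▸ pow_ne_zero n hp.ne_zero)
  obtain ⟨m, -, hm⟩ := (Nat.dvd_prime_pow hp).1 (hG ▸ H.card_quotient_dvd_card)
  rw [hm]
  refine dvd_pow_self p ?_
  rintro rfl
  exact Finite.one_lt_card.ne' (hm.trans (pow_zero p))

theorem mul_lt_of_div_lt_div_mul {m a : ℕ} (hpm : 0 < p * m)
    (h : (i : ℝ) / p < (a : ℝ) / (p * m : ℕ)) : i * m < a := by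
  have hm : (m : ℝ) ≠ 0 := by exact_mod_cast (Nat.pos_of_mul_pos_left hpm).ne'
  rw [← mul_div_mul_right (i : ℝ) p hm, ← Nat.cast_mul p m,
    div_lt_div_iff_of_pos_right (Nat.cast_pos.2 hpm)] at h
  exact_mod_cast h

theorem density_add_le_of_stabilizer_eq_bot [Finite G] (hp : p ∣ Nat.card G) (hC : C.Nonempty)
    (hA : (i : ℝ) / p < (A.ncard : ℝ) / Nat.card G)
    (hB : (j : ℝ) / p < (B.ncard : ℝ) / Nat.card G)
    (hne : A + B + C ≠ Set.univ) (hstab : stabilizer G (A + B + C) = ⊥) :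
    (A.ncard : ℝ) / Nat.card G + (B.ncard : ℝ) / Nat.card G + 2 * ((C.ncard : ℝ) / Nat.card G) ≤
      2 - ((i : ℝ) + j) / p := by
  have hG : 0 < Nat.card G := Nat.card_pos
  have hlt : (A + B + C).ncard < Nat.card G := by
    rw [← Set.ncard_univ]
    exact Set.ncard_lt_ncard (Set.ssubset_univ_iff.2 hne)
  obtain ⟨m, hm⟩ := hp
  rw [hm] at hA hB hG hlt ⊢
  have hA' : i * m < A.ncard := mul_lt_of_div_lt_div_mul hG hA
  have hB' : j * m < B.ncard := mul_lt_of_div_lt_div_mul hG hB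
  have hsum : A.ncard + B.ncard + C.ncard ≤ (A + B + C).ncard + 2 :=
    ncard_add_ncard_add_ncard_le_of_stabilizer_eq_bot A.toFinite B.toFinite C.toFinite
      (Set.nonempty_of_ncard_ne_zero (by omega)) (Set.nonempty_of_ncard_ne_zero (by omega)) hC hstab
  have hmain : (A.ncard : ℝ) + B.ncard + 2 * C.ncard + (i * m + j * m) ≤ 2 * (p * m) := by
    have : A.ncard + B.ncard + 2 * C.ncard + (i * m + j * m) ≤ 2 * (p * m) := by omega
    exact_mod_cast this
  have hp₀ : (0 : ℝ) < p := Nat.cast_pos.2 (Nat.pos_of_mul_pos_right hG)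
  have hm₀ : (0 : ℝ) < m := Nat.cast_pos.2 (Nat.pos_of_mul_pos_left hG)
  push_cast
  field_simp
  linarith

theorem stmt5_general (hp : p.Prime) (hG : Nat.card G = p ^ n) (hC : C.Nonempty)
    (hA : (i : ℝ) / p < (A.ncard : ℝ) / Nat.card G)
    (hB : (j : ℝ) / p < (B.ncard : ℝ) / Nat.card G)
    (hABC : 2 - ((i : ℝ) + j) / p < (A.ncard : ℝ) / Nat.card G + (B.ncard : ℝ) / Nat.card G +
      2 * ((C.ncard : ℝ) / Nat.card G)) :
    A + B + C = Set.univ := by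
  have : Finite G := Nat.finite_of_card_ne_zero (hG ▸ pow_ne_zero n hp.ne_zero)
  by_contra hne
  let K := stabilizer G (A + B + C)
  let π : Set G → Set (G ⧸ K) := Set.image (↑)
  have hπ (X : Set G) : (X.ncard : ℝ) / Nat.card G ≤ ((π X).ncard : ℝ) / Nat.card (G ⧸ K) :=
    ncard_div_card_le_ncard_image_mk_div_card K X
  have hadd (X Y : Set G) : π (X + Y) = π X + π Y := Set.image_add (QuotientAddGroup.mk' K)
  have hsum : π (A + B + C) = π A + π B + π C := by rw [hadd, hadd]
  have hne' : π A + π B + π C ≠ Set.univ := hsum ▸ image_mk_stabilizer_ne_univ hne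
  have hstab : stabilizer (G ⧸ K) (π A + π B + π C) = ⊥ :=
    hsum ▸ stabilizer_image_coe_quotient (A + B + C)
  have hAne : A.Nonempty := nonempty_of_lt_ncard_div (by positivity) hA
  have hBne : B.Nonempty := nonempty_of_lt_ncard_div (by positivity) hB
  have hK : Nontrivial (G ⧸ K) := not_subsingleton_iff_nontrivial.1 fun _ ↦ hne'
    (((hAne.image _).add (hBne.image _)).add (hC.image _)).eq_univ
  have hle := density_add_le_of_stabilizer_eq_bot (dvd_card_quotient_of_card_eq_prime_pow hp hG K)
    (hC.image _) (hA.trans_le (hπ A)) (hB.trans_le (hπ B)) hne' hstab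
  linarith [hπ A, hπ B, hπ C]

end Quotient

/-- If `A, B, C ⊆ (ℤ/5ℤ)ⁿ` have densities `α, β, γ` with `0.4 < α < 0.5`,
`0.4 < β < 0.5` and `α + β + 3γ > 1.5`, then `A + B + C = G`. -/
theorem stmt5 (n : ℕ) (hn : 1 ≤ n) (A B C : Set (Fin n → ZMod 5))
    (hα₁ : (0.4 : ℝ) < (A.ncard : ℝ) / 5 ^ n) (hα₂ : (A.ncard : ℝ) / 5 ^ n < 0.5)
    (hβ₁ : (0.4 : ℝ) < (B.ncard : ℝ) / 5 ^ n) (hβ₂ : (B.ncard : ℝ) / 5 ^ n < 0.5)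
    (hsum : (A.ncard : ℝ) / 5 ^ n + (B.ncard : ℝ) / 5 ^ n
        + 3 * ((C.ncard : ℝ) / 5 ^ n) > 1.5) :
    A + B + C = Set.univ := by
  have hγ : (0 : ℝ) < (C.ncard : ℝ) / 5 ^ n := by linarith
  have hC : C.Nonempty := nonempty_of_lt_ncard_div le_rfl hγ
  have hG : Nat.card (Fin n → ZMod 5) = 5 ^ n := by simp
  refine stmt5_general (i := 2) (j := 2) Nat.prime_five hG hC ?_ ?_ ?_ <;>
    norm_num [hG] at * <;> linarith
end
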